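/- arXiv:2302.12384 — 2 statements merged into one kernel-verified Lean document; each statement's English description precedes it below -/
import Mathlib

section
/- (Coercivity of the linearized Bogomol'nyi operator L_Q) Let m ≥ 1 be an integer and let Z₁, Z₂ : (0,∞) → ℂ be smooth, compactly supported in (0,∞), and satisfy (ΛQ,Z₁)_r·(iQ,Z₂)_r − (iQ,Z₁)_r·(ΛQ,Z₂)_r ≠ 0. Then there exist constants 0 < c ≤ C < ∞ such that for every continuously differentiable f : (0,∞) → ℂ with ‖f‖_{Ḣ¹_m} < ∞ and (f,Z₁)_r = (f,Z₂)_r = 0, one has c·‖f‖_{Ḣ¹_m} ≤ ‖L_Q f‖_{L²} ≤ C·‖f‖_{Ḣ¹_m}. -/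
open MeasureTheory Set Filter

noncomputable section

/-- The Jackiw–Pi vortex `Q(r) = √8 (m+1) r^m / (1 + r^(2m+2))`. -/
def Q (m : ℕ) (r : ℝ) : ℝ :=
  Real.sqrt 8 * (m + 1) * r ^ m / (1 + r ^ (2 * m + 2))

/-- `A_θ[u](r) = -(1/2) ∫₀^r |u(r')|² r' dr'`. -/
def Atheta (u : ℝ → ℂ) (r : ℝ) : ℝ :=
  -(1 / 2) * ∫ s in (0:ℝ)..r, ‖u s‖ ^ 2 * s

/-- Bilinear version `A_θ[f,g](r) = -(1/2) ∫₀^r Re(conj f g) r' dr'`. -/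
def Atheta2 (f g : ℝ → ℂ) (r : ℝ) : ℝ :=
  -(1 / 2) * ∫ s in (0:ℝ)..r, ((starRingEnd ℂ) (f s) * g s).re * s

/-- `A_t[u](r) = -∫_r^∞ (m + A_θ[u](r')) |u(r')|² / r' dr'`. -/
def At (m : ℕ) (u : ℝ → ℂ) (r : ℝ) : ℝ :=
  -∫ s in Set.Ioi r, ((m : ℝ) + Atheta u s) * ‖u s‖ ^ 2 / s

/-- Squared (2D radial) `L²` norm: `‖u‖² = 2π ∫₀^∞ |u(r)|² r dr`. -/
def L2sq (u : ℝ → ℂ) : ℝ :=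
  2 * Real.pi * ∫ r in Set.Ioi (0:ℝ), ‖u r‖ ^ 2 * r

/-- Squared equivariant `Ḣ¹_m` norm. -/
def H1msq (m : ℕ) (u : ℝ → ℂ) : ℝ :=
  2 * Real.pi * ∫ r in Set.Ioi (0:ℝ), (‖deriv u r‖ ^ 2 + (m : ℝ) ^ 2 * ‖u r‖ ^ 2 / r ^ 2) * r

/-- The energy functional. -/
def Energy (m : ℕ) (u : ℝ → ℂ) : ℝ :=
  2 * Real.pi * ∫ r in Set.Ioi (0:ℝ),
    ((1 / 2) * ‖deriv u r‖ ^ 2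
      + (1 / 2) * (((m : ℝ) + Atheta u r) / r) ^ 2 * ‖u r‖ ^ 2
      - (1 / 4) * ‖u r‖ ^ 4) * r

/-- The Chern–Simons–Schrödinger equation at the point `(t, r)`:
`i ∂_t u - A_t[u] u + ∂_r² u + (1/r) ∂_r u - ((m + A_θ[u])/r)² u + |u|² u = 0`. -/
def CSSeq (m : ℕ) (u : ℝ → ℝ → ℂ) (t r : ℝ) : Prop :=
  Complex.I * deriv (fun s => u s r) t
    - (At m (u t) r : ℂ) * u t r
    + deriv (deriv (u t)) r
    + (1 / (r : ℂ)) * deriv (u t) r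
    - ((((m : ℝ) + Atheta (u t) r) / r : ℝ) : ℂ) ^ 2 * u t r
    + ((‖u t r‖ : ℝ) : ℂ) ^ 2 * u t r = 0

/-- A classical `m`-equivariant solution of CSS on the open interval `I`. -/
structure IsCSS (m : ℕ) (I : Set ℝ) (u : ℝ → ℝ → ℂ) : Prop where
  smooth : ContDiffOn ℝ (⊤ : ℕ∞) (fun p : ℝ × ℝ => u p.1 p.2) (I ×ˢ Set.Ioi (0:ℝ))
  integrable : ∀ t ∈ I, IntegrableOn (fun r => ‖u t r‖ ^ 2 * r) (Set.Ioi (0:ℝ))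
  equivariant : ∃ U : ℝ → ℝ × ℝ → ℂ,
    ContDiffOn ℝ (⊤ : ℕ∞) (fun p : ℝ × (ℝ × ℝ) => U p.1 p.2) (I ×ˢ (Set.univ : Set (ℝ × ℝ))) ∧
    ∀ t ∈ I, ∀ x : ℝ × ℝ, x ≠ 0 →
      U t x = u t (Real.sqrt (x.1 ^ 2 + x.2 ^ 2)) *
        (((x.1 : ℂ) + (x.2 : ℂ) * Complex.I) / ((Real.sqrt (x.1 ^ 2 + x.2 ^ 2) : ℝ) : ℂ)) ^ m
  bounded : ∀ J : Set ℝ, J ⊆ I → IsCompact J → ∃ C : ℝ, ∀ t ∈ J,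
    Real.sqrt (L2sq (u t)) + Real.sqrt (H1msq m (u t)) ≤ C
  eq : ∀ t ∈ I, ∀ r : ℝ, 0 < r → CSSeq m u t r

/-- Tightness: uniformly small mass near spatial infinity. -/
def Tight (I : Set ℝ) (u : ℝ → ℝ → ℂ) : Prop :=
  ∀ η : ℝ, 0 < η → ∃ R : ℝ, ∀ t ∈ I,
    2 * Real.pi * ∫ r in Set.Ioi R, ‖u t r‖ ^ 2 * r < η

/-- The real inner product `(f,g)_r = Re (2π ∫₀^∞ f conj(g) r dr)`. -/
def iprod (f g : ℝ → ℂ) : ℝ :=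
  2 * Real.pi * (∫ r in Set.Ioi (0:ℝ), f r * (starRingEnd ℂ) (g r) * (r : ℂ)).re

/-- `ΛQ = r Q' + Q`. -/
def LamQ (m : ℕ) (r : ℝ) : ℝ := r * deriv (Q m) r + Q m r

/-- The linearized Bogomol'nyi operator `L_Q`. -/
def LQ (m : ℕ) (f : ℝ → ℂ) (r : ℝ) : ℂ :=
  deriv f r - ((((m : ℝ) + Atheta (fun s => (Q m s : ℂ)) r) / r : ℝ) : ℂ) * f r
    - ((2 * Atheta2 (fun s => (Q m s : ℂ)) f r / r : ℝ) : ℂ) * (Q m r : ℂ)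

end

/-!
In the measure `dr / r` the norms become `‖L_Q f‖_{L²} = √(2π) ‖r L_Q f‖` and
`‖f‖²_{Ḣ¹_m} = 2π (‖r f'‖² + m² ‖f‖²)`, and `r L_Q f - r f'` is bounded by `f`; this gives the
upper bound and reduces the lower one to `‖f‖ ≲ ‖r L_Q f‖`.

Put `b = m + 1 + A_θ[Q]`, so that `ΛQ = b Q`. The quantity `P = r² Q Re f + 4 b A_θ[Q, f]` satisfies
`P' = r Q Re (r L_Q f)` and `P(0) = 0`, hence `|P| ≲ ‖r L_Q f‖`. Eliminating `Re f` leaves the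
equation `r A' = 2 b A - P / 2` for `A = A_θ[Q, f]`. If `A(1) = 0`, comparison with the barrier `-b`
bounds `A` by `sup |P|`, so the nonlocal term of `L_Q` is controlled. Since `b(1) = 0`, `P(1)` also
controls `Re f(1)`; if moreover `Im f(1) = 0`, Hardy inequalities for the local operator
`r f' - (b - 1) f` on both sides of `r = 1` bound `f`.

Both normalizations at `r = 1` are achieved by subtracting a combination of `ΛQ` and `iQ`, which
span the kernel of `L_Q`, and the orthogonality conditions control its coefficients.
-/

open scoped Topology

noncomputable section

section LogMeasure

variable {E F G : Type*} [NormedAddCommGroup E] [NormedAddCommGroup F] [NormedAddCommGroup G]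

/-- The measure `dr / r` on `(0, ∞)`, invariant under dilations. All the norms of the theorem are
`L²(dr / r)` norms: `‖u‖_{L²}² = 2π ‖r u‖²` and `‖f‖_{Ḣ¹_m}² = 2π (‖r f'‖² + m² ‖f‖²)`. -/
def logMeasure : Measure ℝ :=
  (volume.restrict (Ioi 0)).withDensity fun r => ENNReal.ofReal r⁻¹

/-- The norm of `L²(dr / r)`, with Mathlib's convention that it vanishes outside that space. -/
abbrev logNorm (f : ℝ → E) : ℝ := lpNorm f 2 logMeasure

lemma measurable_ofReal_inv : Measurable fun r : ℝ => ENNReal.ofReal r⁻¹ :=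
  measurable_inv.ennreal_ofReal

lemma ae_logMeasure_of_forall_pos {p : ℝ → Prop} (h : ∀ r, 0 < r → p r) :
    ∀ᵐ r ∂logMeasure, p r :=
  (withDensity_absolutelyContinuous _ _).ae_le (ae_restrict_of_forall_mem measurableSet_Ioi h)

lemma aestronglyMeasurable_logMeasure_iff {f : ℝ → E} :
    AEStronglyMeasurable f logMeasure ↔ AEStronglyMeasurable f (volume.restrict (Ioi 0)) := by
  have density_ne_zero : ∀ᵐ r : ℝ ∂volume.restrict (Ioi 0), ENNReal.ofReal r⁻¹ ≠ 0 :=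
    ae_restrict_of_forall_mem measurableSet_Ioi fun r hr => by simpa using mem_Ioi.1 hr
  exact ⟨fun h => h.mono_ac (withDensity_absolutelyContinuous' measurable_ofReal_inv.aemeasurable
    density_ne_zero), fun h => h.mono_ac (withDensity_absolutelyContinuous _ _)⟩

lemma integrable_logMeasure_iff {φ : ℝ → ℝ} :
    Integrable φ logMeasure ↔ IntegrableOn (fun r => φ r / r) (Ioi 0) := by
  rw [logMeasure, integrable_withDensity_iff_integrable_smul₀' measurable_ofReal_inv.aemeasurable
    (ae_of_all _ fun _ => ENNReal.ofReal_lt_top)]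
  refine integrableOn_congr_fun (fun r hr => ?_) measurableSet_Ioi
  simp only [ENNReal.toReal_ofReal (inv_nonneg.2 (mem_Ioi.1 hr).le), smul_eq_mul]
  ring

lemma integral_logMeasure (φ : ℝ → ℝ) : ∫ r, φ r ∂logMeasure = ∫ r in Ioi 0, φ r / r := by
  rw [logMeasure, integral_withDensity_eq_integral_toReal_smul measurable_ofReal_inv
    (ae_of_all _ fun _ => ENNReal.ofReal_lt_top)]
  refine setIntegral_congr_fun measurableSet_Ioi fun r hr => ?_
  simp only [ENNReal.toReal_ofReal (inv_nonneg.2 (mem_Ioi.1 hr).le), smul_eq_mul]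
  ring

lemma memLp_logMeasure_iff {f : ℝ → E} (hf : AEStronglyMeasurable f (volume.restrict (Ioi 0))) :
    MemLp f 2 logMeasure ↔ IntegrableOn (fun r => ‖f r‖ ^ 2 / r) (Ioi 0) := by
  rw [memLp_two_iff_integrable_sq_norm (aestronglyMeasurable_logMeasure_iff.2 hf),
    integrable_logMeasure_iff]

lemma integrableOn_norm_sq_div_of_memLp {f : ℝ → E} (hf : MemLp f 2 logMeasure) :
    IntegrableOn (fun r => ‖f r‖ ^ 2 / r) (Ioi 0) :=
  integrable_logMeasure_iff.1 ((memLp_two_iff_integrable_sq_norm hf.1).1 hf)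

lemma logNorm_eq_rpow {f : ℝ → E} (hf : AEStronglyMeasurable f logMeasure) :
    logNorm f = (∫ r, ‖f r‖ ^ (2 : ℝ) ∂logMeasure) ^ (1 / 2 : ℝ) := by
  rw [logNorm, lpNorm_eq_integral_norm_rpow_toReal two_ne_zero ENNReal.ofNat_ne_top hf]
  norm_num

lemma logNorm_sq {f : ℝ → E} (hf : AEStronglyMeasurable f logMeasure) :
    logNorm f ^ 2 = ∫ r in Ioi 0, ‖f r‖ ^ 2 / r := by
  have integral_nonneg : 0 ≤ ∫ r, ‖f r‖ ^ (2 : ℝ) ∂logMeasure := by positivity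
  rw [logNorm_eq_rpow hf, ← Real.sqrt_eq_rpow, Real.sq_sqrt integral_nonneg, integral_logMeasure]
  simp only [Real.rpow_two]

lemma logNorm_le_mul_of_norm_le {f : ℝ → E} {g : ℝ → F} {C : ℝ} (hC : 0 ≤ C)
    (hg : MemLp g 2 logMeasure) (h : ∀ r, 0 < r → ‖f r‖ ≤ C * ‖g r‖) :
    logNorm f ≤ C * logNorm g := by
  by_cases hf : AEStronglyMeasurable f logMeasure
  · have := eLpNorm_le_mul_eLpNorm_of_ae_le_mul (ae_logMeasure_of_forall_pos h) 2
    rw [logNorm, logNorm, ← toReal_eLpNorm hf, ← toReal_eLpNorm hg.1, ← ENNReal.toReal_ofReal hC,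
      ← ENNReal.toReal_mul]
    exact ENNReal.toReal_mono (ENNReal.mul_ne_top ENNReal.ofReal_ne_top hg.2.ne) this
  · rw [logNorm, lpNorm_of_not_aestronglyMeasurable hf]
    exact mul_nonneg hC lpNorm_nonneg

lemma memLp_logMeasure_of_norm_le {f : ℝ → E} {g : ℝ → F} {C : ℝ}
    (hf : AEStronglyMeasurable f (volume.restrict (Ioi 0))) (hg : MemLp g 2 logMeasure)
    (h : ∀ r, 0 < r → ‖f r‖ ≤ C * ‖g r‖) : MemLp f 2 logMeasure :=
  hg.of_le_mul (aestronglyMeasurable_logMeasure_iff.2 hf) (ae_logMeasure_of_forall_pos h)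

lemma integrableOn_norm_mul_norm_div {u : ℝ → E} {v : ℝ → F} (hu : MemLp u 2 logMeasure)
    (hv : MemLp v 2 logMeasure) : IntegrableOn (fun r => ‖u r‖ * ‖v r‖ / r) (Ioi 0) :=
  integrable_logMeasure_iff.1 (hu.norm.integrable_mul hv.norm)

lemma integral_norm_mul_norm_div_le {u : ℝ → E} {v : ℝ → F} (hu : MemLp u 2 logMeasure)
    (hv : MemLp v 2 logMeasure) :
    ∫ r in Ioi 0, ‖u r‖ * ‖v r‖ / r ≤ logNorm u * logNorm v := by
  have holder := integral_mul_norm_le_Lp_mul_Lq Real.HolderConjugate.two_two (μ := logMeasure)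
    (f := fun r => ‖u r‖) (g := fun r => ‖v r‖) (by simpa using hu.norm) (by simpa using hv.norm)
  simp only [norm_norm] at holder
  rwa [← logNorm_eq_rpow hu.1, ← logNorm_eq_rpow hv.1, integral_logMeasure] at holder

lemma integrableOn_of_norm_le_mul_div {u : ℝ → E} {v : ℝ → F} {φ : ℝ → G}
    (hu : MemLp u 2 logMeasure) (hv : MemLp v 2 logMeasure)
    (h : ∀ r, 0 < r → ‖φ r‖ ≤ ‖u r‖ * ‖v r‖ / r)
    (hφ : AEStronglyMeasurable φ (volume.restrict (Ioi 0))) :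
    IntegrableOn φ (Ioi 0) :=
  (integrableOn_norm_mul_norm_div hu hv).mono' hφ (ae_restrict_of_forall_mem measurableSet_Ioi h)

lemma norm_setIntegral_le_logNorm_mul_logNorm [NormedSpace ℝ G] {u : ℝ → E} {v : ℝ → F}
    {φ : ℝ → G} {s : Set ℝ} (hu : MemLp u 2 logMeasure) (hv : MemLp v 2 logMeasure)
    (h : ∀ r, 0 < r → ‖φ r‖ ≤ ‖u r‖ * ‖v r‖ / r) (hs : MeasurableSet s) (hs_pos : s ⊆ Ioi 0) :
    ‖∫ r in s, φ r‖ ≤ logNorm u * logNorm v :=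
  have hint := integrableOn_norm_mul_norm_div hu hv
  calc ‖∫ r in s, φ r‖ ≤ ∫ r in s, ‖u r‖ * ‖v r‖ / r :=
        norm_integral_le_of_norm_le (hint.mono_set hs_pos)
          (ae_restrict_of_forall_mem hs fun r hr => h r (hs_pos hr))
    _ ≤ ∫ r in Ioi 0, ‖u r‖ * ‖v r‖ / r :=
        setIntegral_mono_set hint (ae_restrict_of_forall_mem measurableSet_Ioi fun r hr => by
          have : 0 < r := hr
          positivity) hs_pos.eventuallyLE
    _ ≤ logNorm u * logNorm v := integral_norm_mul_norm_div_le hu hv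

lemma pow_le_one_add_pow {j n : ℕ} (hjn : j ≤ n) {r : ℝ} (hr : 0 ≤ r) : r ^ j ≤ 1 + r ^ n := by
  rcases le_total r 1 with hr1 | hr1
  · linarith [pow_le_one₀ hr hr1 (n := j), pow_nonneg hr n]
  · linarith [pow_le_pow_right₀ hr1 hjn]

lemma memLp_div_one_add_sq : MemLp (fun r : ℝ => r / (1 + r ^ 2)) 2 logMeasure := by
  have hmeas : Measurable fun r : ℝ => r / (1 + r ^ 2) := by fun_prop
  refine (memLp_logMeasure_iff hmeas.aestronglyMeasurable).2
    (integrable_inv_one_add_sq.integrableOn.mono'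
      ((hmeas.norm.pow_const 2).div measurable_id).aestronglyMeasurable
      (ae_restrict_of_forall_mem measurableSet_Ioi fun r hr => ?_))
  have hr : 0 < r := hr
  rw [Real.norm_of_nonneg (by positivity), Real.norm_of_nonneg (by positivity), div_pow, div_div,
    inv_eq_one_div, div_le_div_iff₀ (by positivity) (by positivity)]
  nlinarith [mul_nonneg hr.le (sq_nonneg (r - 1)), pow_pos hr 3, pow_pos hr 5]

lemma memLp_pow_div_one_add_pow {k n : ℕ} (hk : 1 ≤ k) (hkn : k < n) :
    MemLp (fun r : ℝ => r ^ k / (1 + r ^ n)) 2 logMeasure := by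
  have hmeas : Measurable fun r : ℝ => r ^ k / (1 + r ^ n) := by fun_prop
  refine memLp_logMeasure_of_norm_le (C := 2) hmeas.aestronglyMeasurable memLp_div_one_add_sq
    fun r hr => ?_
  obtain ⟨j, rfl⟩ := Nat.exists_eq_add_of_le' hk
  rw [Real.norm_of_nonneg (by positivity), Real.norm_of_nonneg (by positivity), ← mul_div_assoc,
    div_le_div_iff₀ (by positivity) (by positivity)]
  calc r ^ (j + 1) * (1 + r ^ 2) = r * (r ^ j + r ^ (j + 2)) := by ring
    _ ≤ r * ((1 + r ^ n) + (1 + r ^ n)) := by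
      gcongr <;> exact pow_le_one_add_pow (by omega) hr.le
    _ = 2 * r * (1 + r ^ n) := by ring

end LogMeasure

section Hardy

lemma setIntegral_Ioc_le_of_le_deriv {ψ ψ' φ : ℝ → ℝ} {a b : ℝ} (hab : a < b)
    (hψ : ∀ r ∈ Ioc a b, HasDerivAt ψ (ψ' r) r) (hφ : IntegrableOn φ (Ioc a b))
    (hle : ∀ r ∈ Ioc a b, φ r ≤ ψ' r) (hψ_nonneg : ∀ r ∈ Ioc a b, 0 ≤ ψ r) :
    ∫ r in Ioc a b, φ r ≤ ψ b := by
  have bound_from : ∀ ε ∈ Ioc a b, ∫ r in ε..b, φ r ≤ ψ b := fun ε hε => by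
    have mem {r : ℝ} (hr : r ∈ Icc ε b) : r ∈ Ioc a b := ⟨hε.1.trans_le hr.1, hr.2⟩
    have := intervalIntegral.integral_le_sub_of_hasDeriv_right_of_le hε.2
      (fun r hr => (hψ r (mem hr)).continuousAt.continuousWithinAt)
      (fun r hr => (hψ r (mem (Ioo_subset_Icc_self hr))).hasDerivWithinAt)
      (hφ.mono_set fun r hr => mem hr) (fun r hr => hle r (mem (Ioo_subset_Icc_self hr)))
    linarith [hψ_nonneg ε hε]
  have cont := intervalIntegral.continuousOn_primitive_interval_left (a := a) (b := b) (f := φ)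
    (μ := volume) (by rwa [uIcc_of_le hab.le, integrableOn_Icc_iff_integrableOn_Ioc])
  rw [uIcc_of_le hab.le] at cont
  have lim := (cont a (left_mem_Icc.2 hab.le)).mono_left (nhdsWithin_mono a Ioc_subset_Icc_self)
  rw [← intervalIntegral.integral_of_le hab.le]
  have : (𝓝[Ioc a b] a).NeBot := left_nhdsWithin_Ioc_neBot hab
  exact le_of_tendsto lim (eventually_mem_nhdsWithin.mono bound_from)

lemma setIntegral_Ioi_le_of_deriv_le_neg {ψ ψ' φ : ℝ → ℝ} {a : ℝ}
    (hψ : ∀ r ∈ Ici a, HasDerivAt ψ (ψ' r) r) (hφ : IntegrableOn φ (Ioi a))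
    (hle : ∀ r ∈ Ici a, ψ' r ≤ -φ r) (hψ_nonneg : ∀ r ∈ Ici a, 0 ≤ ψ r) :
    ∫ r in Ioi a, φ r ≤ ψ a := by
  refine le_of_tendsto (intervalIntegral_tendsto_integral_Ioi a hφ tendsto_id) ?_
  filter_upwards [eventually_ge_atTop a] with b hb
  have := intervalIntegral.sub_le_integral_of_hasDeriv_right_of_le hb
      (fun r hr => (hψ r hr.1).continuousAt.continuousWithinAt)
      (fun r hr => (hψ r hr.1.le).hasDerivWithinAt) (φ := fun r => - φ r)
      (((integrableOn_Icc_iff_integrableOn_Ioc).2 (hφ.mono_set Ioc_subset_Ioi_self)).neg)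
      (fun r hr => hle r hr.1.le)
  rw [intervalIntegral.integral_neg] at this
  simp only [id]
  linarith [hψ_nonneg b hb]

variable {E : Type*} [NormedAddCommGroup E] [InnerProductSpace ℝ E] {g F : ℝ → E} {c : ℝ → ℝ}

lemma hasDerivAt_norm_sq_of_euler {r : ℝ} {y : E} (hg : HasDerivAt g (r⁻¹ • y) r) :
    HasDerivAt (fun s => ‖g s‖ ^ 2) (2 * inner ℝ (g r) y / r) r := by
  convert hg.norm_sq using 1
  rw [inner_smul_right]
  ring

lemma hardy_Ioc {w : ℝ → ℝ} {a K : ℝ} (ha : 0 < a)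
    (hg : ∀ r ∈ Ioc 0 a,
      HasDerivAt (fun s => w s • g s) (r⁻¹ • (c r • w r • g r + w r • F r)) r)
    (hc : ∀ r ∈ Ioc 0 a, 1 ≤ c r) (hw_ge : ∀ r ∈ Ioc 0 a, 1 ≤ w r)
    (hw_le : ∀ r ∈ Ioc 0 a, w r ≤ K) (hg_int : IntegrableOn (fun r => ‖g r‖ ^ 2 / r) (Ioc 0 a))
    (hF_int : IntegrableOn (fun r => ‖F r‖ ^ 2 / r) (Ioc 0 a)) :
    ∫ r in Ioc 0 a, ‖g r‖ ^ 2 / r ≤ K ^ 2 * (‖g a‖ ^ 2 + ∫ r in Ioc 0 a, ‖F r‖ ^ 2 / r) := by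
  have norm_smul_sq (r : ℝ) (z : E) : ‖w r • z‖ ^ 2 = w r ^ 2 * ‖z‖ ^ 2 := by
    rw [norm_smul, mul_pow, Real.norm_eq_abs, sq_abs]
  have sq_le (r : ℝ) (hr : r ∈ Ioc 0 a) : w r ^ 2 ≤ K ^ 2 :=
    pow_le_pow_left₀ (zero_le_one.trans (hw_ge r hr)) (hw_le r hr) 2
  have := setIntegral_Ioc_le_of_le_deriv ha (fun r hr => hasDerivAt_norm_sq_of_euler (hg r hr))
    (hg_int.sub (hF_int.const_mul (K ^ 2))) (fun r hr => ?_) (fun r _ => by positivity)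
  · rw [integral_sub' hg_int (hF_int.const_mul (K ^ 2)), integral_const_mul, norm_smul_sq] at this
    have boundary := mul_le_mul_of_nonneg_right (sq_le a ⟨ha, le_rfl⟩) (sq_nonneg ‖g a‖)
    linarith
  have hr0 : 0 < r := hr.1
  have young : 0 ≤ ‖w r • g r + w r • F r‖ ^ 2 := by positivity
  rw [norm_add_sq_real] at young
  have damping : ‖w r • g r‖ ^ 2 ≤ c r * ‖w r • g r‖ ^ 2 :=
    le_mul_of_one_le_left (by positivity) (hc r hr)
  have weight_ge : ‖g r‖ ^ 2 ≤ ‖w r • g r‖ ^ 2 :=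
    norm_smul_sq r (g r) ▸ le_mul_of_one_le_left (by positivity) (one_le_pow₀ (hw_ge r hr))
  have weight_le : ‖w r • F r‖ ^ 2 ≤ K ^ 2 * ‖F r‖ ^ 2 :=
    norm_smul_sq r (F r) ▸ mul_le_mul_of_nonneg_right (sq_le r hr) (by positivity)
  simp only [Pi.sub_apply, ← mul_div_assoc, ← sub_div, inner_add_right,
    inner_smul_right _ _ (c r), real_inner_self_eq_norm_sq]
  gcongr
  linarith

lemma hardy_Ioi {a : ℝ} (ha : 0 < a)
    (hg : ∀ r ∈ Ici a, HasDerivAt g (r⁻¹ • (c r • g r + F r)) r)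
    (hc : ∀ r ∈ Ici a, c r ≤ -1) (hg_int : IntegrableOn (fun r => ‖g r‖ ^ 2 / r) (Ioi a))
    (hF_int : IntegrableOn (fun r => ‖F r‖ ^ 2 / r) (Ioi a)) :
    ∫ r in Ioi a, ‖g r‖ ^ 2 / r ≤ ‖g a‖ ^ 2 + ∫ r in Ioi a, ‖F r‖ ^ 2 / r := by
  have := setIntegral_Ioi_le_of_deriv_le_neg (fun r hr => hasDerivAt_norm_sq_of_euler (hg r hr))
    (hg_int.sub hF_int) (fun r hr => ?_) (fun r _ => by positivity)
  · rw [integral_sub' hg_int hF_int] at this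
    linarith
  have hr0 : 0 < r := ha.trans_le hr
  have young : 0 ≤ ‖g r - F r‖ ^ 2 := by positivity
  rw [norm_sub_sq_real] at young
  have damping : c r * ‖g r‖ ^ 2 ≤ -1 * ‖g r‖ ^ 2 := by gcongr; exact hc r hr
  simp only [Pi.sub_apply, ← sub_div, inner_add_right, inner_smul_right,
    real_inner_self_eq_norm_sq, ← neg_div]
  gcongr
  linarith

end Hardy

section Vortex

variable (m : ℕ)

/-- The function `b = (m+1)(1 - r^(2m+2))/(1 + r^(2m+2))`, the logarithmic derivative
`r (rQ)' / (rQ)`; it governs both `ΛQ = b Q` and `m + A_θ[Q] = b - 1`. -/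
def lamCoeff (r : ℝ) : ℝ := (m + 1) * (1 - r ^ (2 * m + 2)) / (1 + r ^ (2 * m + 2))

lemma one_add_pow_even_pos (r : ℝ) : 0 < 1 + r ^ (2 * m + 2) := by
  have : 0 ≤ r ^ (2 * m + 2) := Even.pow_nonneg ⟨m + 1, by ring⟩ r
  linarith

lemma hasDerivAt_one_add_pow (r : ℝ) :
    HasDerivAt (fun s : ℝ => 1 + s ^ (2 * m + 2)) ((2 * m + 2) * r ^ (2 * m + 1)) r := by
  simpa using (hasDerivAt_pow (2 * m + 2) r).const_add 1

lemma Q_nonneg {r : ℝ} (hr : 0 ≤ r) : 0 ≤ Q m r :=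
  div_nonneg (by positivity) (one_add_pow_even_pos m r).le

lemma Q_pos {r : ℝ} (hr : 0 < r) : 0 < Q m r :=
  div_pos (by positivity) (one_add_pow_even_pos m r)

lemma Q_sq (r : ℝ) : Q m r ^ 2 = 8 * (m + 1) ^ 2 * r ^ (2 * m) / (1 + r ^ (2 * m + 2)) ^ 2 := by
  rw [Q, div_pow, mul_pow, mul_pow, Real.sq_sqrt (by norm_num)]
  ring

lemma lamCoeff_sq_add (r : ℝ) : lamCoeff m r ^ 2 + (r * Q m r) ^ 2 / 2 = (m + 1) ^ 2 := by
  have := (one_add_pow_even_pos m r).ne'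
  rw [mul_pow, Q_sq, lamCoeff]
  field_simp
  ring

lemma abs_lamCoeff_le (r : ℝ) : |lamCoeff m r| ≤ m + 1 :=
  abs_le_of_sq_le_sq (by nlinarith [lamCoeff_sq_add m r, sq_nonneg (r * Q m r)]) (by positivity)

lemma lamCoeff_zero : lamCoeff m 0 = m + 1 := by simp [lamCoeff]

lemma lamCoeff_one : lamCoeff m 1 = 0 := by simp [lamCoeff]

lemma lamCoeff_nonneg {r : ℝ} (hr : 0 ≤ r) (hr1 : r ≤ 1) : 0 ≤ lamCoeff m r := by
  have : r ^ (2 * m + 2) ≤ 1 := pow_le_one₀ hr hr1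
  exact div_nonneg (mul_nonneg (by positivity) (by linarith)) (one_add_pow_even_pos m r).le

lemma lamCoeff_nonpos {r : ℝ} (hr : 1 ≤ r) : lamCoeff m r ≤ 0 := by
  have : 1 ≤ r ^ (2 * m + 2) := one_le_pow₀ hr
  exact div_nonpos_of_nonpos_of_nonneg (mul_nonpos_of_nonneg_of_nonpos (by positivity)
    (by linarith)) (one_add_pow_even_pos m r).le

lemma hasDerivAt_lamCoeff (r : ℝ) : HasDerivAt (lamCoeff m) (-(1 / 2) * (Q m r ^ 2 * r)) r := by
  have hne := (one_add_pow_even_pos m r).ne'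
  have hpow := hasDerivAt_one_add_pow m r
  refine (((hpow.const_sub 2).const_mul ((m : ℝ) + 1)).div hpow hne).congr_deriv ?_
    |>.congr_of_eventuallyEq (.of_forall fun s => ?_)
  · rw [Q_sq]
    field_simp
    ring
  · simp only [lamCoeff, Pi.div_apply]
    ring

lemma hasDerivAt_Q {r : ℝ} (hr : r ≠ 0) :
    HasDerivAt (Q m) ((lamCoeff m r - 1) * Q m r / r) r := by
  have hne := (one_add_pow_even_pos m r).ne'
  refine (((hasDerivAt_pow m r).const_mul (√8 * (m + 1))).div
    (hasDerivAt_one_add_pow m r) hne).congr_deriv ?_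
  rw [lamCoeff, Q]
  rcases m with _ | k
  · simp only [CharP.cast_eq_zero, zero_add, mul_one, zero_tsub, pow_zero, mul_zero, zero_mul,
      pow_one, zero_sub, one_mul]
    field_simp
    ring
  · simp only [Nat.cast_add, Nat.cast_one, add_tsub_cancel_right]
    field_simp
    ring

lemma LamQ_eq {r : ℝ} (hr : r ≠ 0) : LamQ m r = lamCoeff m r * Q m r := by
  rw [LamQ, (hasDerivAt_Q m hr).deriv]
  field_simp
  ring

lemma contDiff_Q : ContDiff ℝ 1 (Q m) :=
  ContDiff.div (by fun_prop) (by fun_prop) fun r => (one_add_pow_even_pos m r).ne'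

lemma contDiff_lamCoeff : ContDiff ℝ 1 (lamCoeff m) :=
  ContDiff.div (by fun_prop) (by fun_prop) fun r => (one_add_pow_even_pos m r).ne'

lemma Atheta_Q (r : ℝ) : Atheta (fun s => (Q m s : ℂ)) r = lamCoeff m r - (m + 1) := by
  have ftc := intervalIntegral.integral_eq_sub_of_hasDerivAt (a := 0) (b := r)
    (fun s _ => hasDerivAt_lamCoeff m s)
    (Continuous.intervalIntegrable (by have := (contDiff_Q m).continuous; fun_prop) _ _)
  rw [lamCoeff_zero, intervalIntegral.integral_const_mul] at ftc
  simpa only [Atheta, Complex.norm_real, Real.norm_eq_abs, sq_abs] using ftc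

lemma hasDerivAt_mul_Q_sq {r : ℝ} (hr : r ≠ 0) :
    HasDerivAt (fun s => (s * Q m s) ^ 2) (2 * lamCoeff m r * (r * Q m r) ^ 2 / r) r := by
  refine (((hasDerivAt_id r).mul (hasDerivAt_Q m hr)).pow 2).congr_deriv ?_
  simp only [Nat.cast_ofNat, Pi.mul_apply, id_eq, Nat.add_one_sub_one, pow_one, one_mul]
  field_simp
  ring

section

variable {m}

lemma memLp_Q (hm : 1 ≤ m) : MemLp (Q m) 2 logMeasure := by
  refine (memLp_pow_div_one_add_pow hm (show m < 2 * m + 2 by omega)).const_mul (√8 * (m + 1))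
    |>.ae_eq (ae_of_all _ fun r => ?_)
  simp only [Q]
  ring

lemma memLp_sq_mul_Q (hm : 1 ≤ m) : MemLp (fun r => r ^ 2 * Q m r) 2 logMeasure := by
  refine (memLp_pow_div_one_add_pow (show 1 ≤ m + 2 by omega) (show m + 2 < 2 * m + 2 by omega))
    |>.const_mul (√8 * (m + 1)) |>.ae_eq (ae_of_all _ fun r => ?_)
  simp only [Q]
  ring

end

end Vortex

section LogSobolev

/-- The class of `C¹` functions on `(0, ∞)` for which `f` and `r f'` lie in `L²(dr / r)`; for
`m ≥ 1` these are the `C¹` functions of finite `Ḣ¹_m` norm. -/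
structure MemLogH1 {E : Type*} [NormedAddCommGroup E] [NormedSpace ℝ E] (f : ℝ → E) : Prop where
  contDiffOn : ContDiffOn ℝ 1 f (Ioi 0)
  memLp : MemLp f 2 logMeasure
  memLp_deriv : MemLp (fun r => r • deriv f r) 2 logMeasure

namespace MemLogH1

variable {E : Type*} [NormedAddCommGroup E]

section NormedSpace

variable [NormedSpace ℝ E] {f g : ℝ → E}

lemma hasDerivAt (hf : MemLogH1 f) {r : ℝ} (hr : 0 < r) : HasDerivAt f (deriv f r) r :=
  ((hf.contDiffOn.differentiableOn one_ne_zero).differentiableAt (Ioi_mem_nhds hr)).hasDerivAt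

lemma continuousOn_deriv (hf : MemLogH1 f) : ContinuousOn (deriv f) (Ioi 0) :=
  hf.contDiffOn.continuousOn_deriv_of_isOpen isOpen_Ioi le_rfl

lemma sub (hf : MemLogH1 f) (hg : MemLogH1 g) : MemLogH1 (f - g) where
  contDiffOn := hf.contDiffOn.sub hg.contDiffOn
  memLp := hf.memLp.sub hg.memLp
  memLp_deriv := (hf.memLp_deriv.sub hg.memLp_deriv).ae_eq <| ae_logMeasure_of_forall_pos
    fun r hr => by
      simp only [Pi.sub_apply, ← smul_sub, ((hf.hasDerivAt hr).sub (hg.hasDerivAt hr)).deriv]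

end NormedSpace

lemma norm_sq_le [InnerProductSpace ℝ E] {f : ℝ → E} (hf : MemLogH1 f) {r : ℝ} (hr : 0 < r) :
    ‖f r‖ ^ 2 ≤ ‖f 1‖ ^ 2 + 2 * (logNorm f * logNorm fun s => s • deriv f s) := by
  have pos_of_mem {s : ℝ} (hs : s ∈ uIcc 1 r) : 0 < s := (lt_min one_pos hr).trans_le hs.1
  have cauchy_schwarz : ∀ s, 0 < s →
      ‖(inner ℝ (f s) (deriv f s) : ℝ)‖ ≤ ‖f s‖ * ‖s • deriv f s‖ / s := fun s hs => by
    rw [norm_smul, Real.norm_of_nonneg hs.le, mul_left_comm, mul_div_cancel_left₀ _ hs.ne']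
    exact norm_inner_le_norm _ _
  have ftc : ∫ s in (1:ℝ)..r, 2 * inner ℝ (f s) (deriv f s) = ‖f r‖ ^ 2 - ‖f 1‖ ^ 2 :=
    intervalIntegral.integral_eq_sub_of_hasDerivAt
      (fun s hs => (hf.hasDerivAt (pos_of_mem hs)).norm_sq)
      (ContinuousOn.intervalIntegrable (continuousOn_const.mul
        ((hf.contDiffOn.continuousOn.inner hf.continuousOn_deriv).mono fun s hs => pos_of_mem hs)))
  have bound := norm_setIntegral_le_logNorm_mul_logNorm hf.memLp hf.memLp_deriv cauchy_schwarz
    measurableSet_uIoc (fun s hs => pos_of_mem (uIoc_subset_uIcc hs))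
  rw [← intervalIntegral.norm_integral_eq_norm_integral_uIoc, Real.norm_eq_abs] at bound
  rw [intervalIntegral.integral_const_mul] at ftc
  linarith [le_abs_self (∫ s in (1:ℝ)..r, inner ℝ (f s) (deriv f s))]

end MemLogH1

end LogSobolev

section LocalOperator

variable {E : Type*} [NormedAddCommGroup E]

/-- The local part `r f' - (m + A_θ[Q]) f` of `r L_Q f`. -/
def localLQ [NormedSpace ℝ E] (m : ℕ) (f : ℝ → E) (r : ℝ) : E :=
  r • deriv f r - (lamCoeff m r - 1) • f r

lemma norm_lamCoeff_sub_one_smul_le [NormedSpace ℝ E] (m : ℕ) (r : ℝ) (z : E) :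
    ‖(lamCoeff m r - 1) • z‖ ≤ (m + 2) * ‖z‖ := by
  rw [norm_smul]
  gcongr
  linarith [norm_sub_le (lamCoeff m r) 1, abs_lamCoeff_le m r, Real.norm_eq_abs (lamCoeff m r),
    norm_one (α := ℝ)]

variable {m : ℕ} {f : ℝ → E}

lemma memLp_lamCoeff_smul [NormedSpace ℝ E] (hf : MemLp f 2 logMeasure) :
    MemLp (fun r => (lamCoeff m r - 1) • f r) 2 logMeasure := by
  have hb : Continuous fun r => lamCoeff m r - 1 :=
    (contDiff_lamCoeff m).continuous.sub continuous_const
  exact hf.of_le_mul (hb.aestronglyMeasurable.smul hf.1)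
    (ae_of_all _ fun r => norm_lamCoeff_sub_one_smul_le m r (f r))

namespace MemLogH1

section NormedSpace

variable [NormedSpace ℝ E]

lemma memLp_localLQ (hf : MemLogH1 f) : MemLp (localLQ m f) 2 logMeasure :=
  hf.memLp_deriv.sub (memLp_lamCoeff_smul hf.memLp)

lemma hasDerivAt_eq_localLQ (hf : MemLogH1 f) {r : ℝ} (hr : 0 < r) :
    HasDerivAt f (r⁻¹ • ((lamCoeff m r - 1) • f r + localLQ m f r)) r := by
  rw [localLQ, add_sub_cancel, inv_smul_smul₀ hr.ne']
  exact hf.hasDerivAt hr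

-- The weight `1 + r^(2m+2)` turns the coefficient `b - 1` into the constant `m`.
lemma hasDerivAt_weighted (hf : MemLogH1 f) {r : ℝ} (hr : 0 < r) :
    HasDerivAt (fun s => (1 + s ^ (2 * m + 2)) • f s)
      (r⁻¹ • ((m : ℝ) • (1 + r ^ (2 * m + 2)) • f r
        + (1 + r ^ (2 * m + 2)) • localLQ m f r)) r := by
  refine ((hasDerivAt_one_add_pow m r).smul (hf.hasDerivAt_eq_localLQ (m := m) hr)).congr_deriv ?_
  have hx := (one_add_pow_even_pos m r).ne'
  rw [lamCoeff]
  match_scalars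
  · field_simp
    ring
  · field_simp

end NormedSpace

variable [InnerProductSpace ℝ E]

lemma integral_Ioc_norm_sq_div_le (hm : 1 ≤ m) (hf : MemLogH1 f) :
    ∫ r in Ioc 0 1, ‖f r‖ ^ 2 / r
      ≤ 2 ^ 2 * (‖f 1‖ ^ 2 + ∫ r in Ioc 0 1, ‖localLQ m f r‖ ^ 2 / r) :=
  hardy_Ioc one_pos (fun r hr => hf.hasDerivAt_weighted (m := m) hr.1)
    (fun r _ => by exact_mod_cast hm)
    (fun r hr => by linarith [pow_nonneg hr.1.le (2 * m + 2)])
    (fun r hr => by linarith [pow_le_one₀ hr.1.le hr.2 (n := 2 * m + 2)])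
    ((integrableOn_norm_sq_div_of_memLp hf.memLp).mono_set Ioc_subset_Ioi_self)
    ((integrableOn_norm_sq_div_of_memLp hf.memLp_localLQ).mono_set Ioc_subset_Ioi_self)

lemma integral_Ioi_norm_sq_div_le (hf : MemLogH1 f) :
    ∫ r in Ioi 1, ‖f r‖ ^ 2 / r ≤ ‖f 1‖ ^ 2 + ∫ r in Ioi 1, ‖localLQ m f r‖ ^ 2 / r :=
  have Ioi_subset : Ioi (1:ℝ) ⊆ Ioi 0 := Ioi_subset_Ioi zero_le_one
  hardy_Ioi one_pos (fun r hr => hf.hasDerivAt_eq_localLQ (one_pos.trans_le hr))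
    (fun r hr => by linarith [lamCoeff_nonpos m hr])
    ((integrableOn_norm_sq_div_of_memLp hf.memLp).mono_set Ioi_subset)
    ((integrableOn_norm_sq_div_of_memLp hf.memLp_localLQ).mono_set Ioi_subset)

lemma logNorm_le_boundary_add_localLQ (hm : 1 ≤ m) (hf : MemLogH1 f) :
    logNorm f ≤ 3 * ‖f 1‖ + 2 * logNorm (localLQ m f) := by
  have split {φ : ℝ → ℝ} (hφ : IntegrableOn φ (Ioi 0)) :
      ∫ r in Ioi 0, φ r = (∫ r in Ioc 0 1, φ r) + ∫ r in Ioi 1, φ r := by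
    rw [← Ioc_union_Ioi_eq_Ioi zero_le_one] at hφ ⊢
    exact setIntegral_union (Ioc_disjoint_Ioi le_rfl) measurableSet_Ioi hφ.left_of_union
      hφ.right_of_union
  have tail_nonneg : 0 ≤ ∫ r in Ioi 1, ‖localLQ m f r‖ ^ 2 / r :=
    setIntegral_nonneg measurableSet_Ioi fun r hr => by
      have : 0 < r := one_pos.trans hr
      positivity
  have sq_le : logNorm f ^ 2 ≤ 5 * ‖f 1‖ ^ 2 + 4 * logNorm (localLQ m f) ^ 2 := by
    rw [logNorm_sq hf.memLp.1, logNorm_sq hf.memLp_localLQ.1,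
      split (integrableOn_norm_sq_div_of_memLp hf.memLp),
      split (integrableOn_norm_sq_div_of_memLp hf.memLp_localLQ)]
    linarith [hf.integral_Ioc_norm_sq_div_le hm, hf.integral_Ioi_norm_sq_div_le (m := m)]
  have boundary_nonneg := norm_nonneg (f 1)
  have local_nonneg : 0 ≤ logNorm (localLQ m f) := lpNorm_nonneg
  refine (pow_le_pow_iff_left₀ lpNorm_nonneg (by positivity) two_ne_zero).1 (sq_le.trans ?_)
  nlinarith [mul_nonneg boundary_nonneg local_nonneg, sq_nonneg ‖f 1‖]

end MemLogH1

end LocalOperator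

section Operator

variable {m : ℕ} {f g : ℝ → ℂ}

/-- The linearized gauge potential `A_θ[Q, f]`. -/
abbrev AthetaQ (m : ℕ) (f : ℝ → ℂ) : ℝ → ℝ := Atheta2 (fun s => (Q m s : ℂ)) f

/-- The function `r L_Q f`, whose norm in `L²(dr / r)` is that of `L_Q f` in `L²(r dr)`. -/
def scaledLQ (m : ℕ) (f : ℝ → ℂ) (r : ℝ) : ℂ := r • LQ m f r

/-- The quantity `P = r² Q Re f + 4 b A_θ[Q, f]`, which satisfies `P' = r Q Re (r L_Q f)` and hence
is a first integral of the equation `L_Q f = 0`. -/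
def firstIntegral (m : ℕ) (f : ℝ → ℂ) (r : ℝ) : ℝ :=
  r ^ 2 * Q m r * (f r).re + 4 * lamCoeff m r * AthetaQ m f r

lemma AthetaQ_eq (m : ℕ) (f : ℝ → ℂ) (r : ℝ) :
    AthetaQ m f r = -(1 / 2) * ∫ s in (0:ℝ)..r, Q m s * (f s).re * s := by
  simp only [Atheta2, Complex.conj_ofReal, Complex.re_ofReal_mul]

lemma scaledLQ_eq (m : ℕ) (f : ℝ → ℂ) {r : ℝ} (hr : r ≠ 0) :
    scaledLQ m f r = localLQ m f r - (2 * AthetaQ m f r) • (Q m r : ℂ) := by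
  have hr' : (r : ℂ) ≠ 0 := by exact_mod_cast hr
  simp only [scaledLQ, LQ, localLQ, Atheta_Q, Complex.real_smul]
  push_cast
  field_simp
  ring

lemma abs_Q_mul_re_le (m : ℕ) (z : ℂ) {r : ℝ} (hr : 0 < r) :
    ‖Q m r * z.re * r‖ ≤ ‖r ^ 2 * Q m r‖ * ‖z‖ / r := by
  have hQ := Q_nonneg m hr.le
  rw [norm_mul, norm_mul, norm_mul, norm_pow, Real.norm_of_nonneg hr.le, Real.norm_of_nonneg hQ,
    le_div_iff₀ hr]
  calc Q m r * ‖z.re‖ * r * r = r ^ 2 * Q m r * ‖z.re‖ := by ring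
    _ ≤ r ^ 2 * Q m r * ‖z‖ := by gcongr; exact Complex.abs_re_le_norm z

lemma integrableOn_Q_mul_re (hm : 1 ≤ m) (hf : MemLp f 2 logMeasure) :
    IntegrableOn (fun s => Q m s * (f s).re * s) (Ioi 0) := by
  have hQ := (contDiff_Q m).continuous.aestronglyMeasurable (μ := volume.restrict (Ioi 0))
  have hre := Complex.continuous_re.comp_aestronglyMeasurable
    (aestronglyMeasurable_logMeasure_iff.1 hf.1)
  exact integrableOn_of_norm_le_mul_div (memLp_sq_mul_Q hm) hf
    (fun r hr => abs_Q_mul_re_le m (f r) hr) ((hQ.mul hre).mul aestronglyMeasurable_id)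

lemma intervalIntegrable_Q_mul_re (hm : 1 ≤ m) (hf : MemLp f 2 logMeasure) {r : ℝ} (hr : 0 ≤ r) :
    IntervalIntegrable (fun s => Q m s * (f s).re * s) volume 0 r :=
  (intervalIntegrable_iff_integrableOn_Ioc_of_le hr).2
    ((integrableOn_Q_mul_re hm hf).mono_set Ioc_subset_Ioi_self)

lemma abs_AthetaQ_le (hm : 1 ≤ m) (hf : MemLp f 2 logMeasure) {r : ℝ} (hr : 0 < r) :
    |AthetaQ m f r| ≤ 1 / 2 * ((logNorm fun s => s ^ 2 * Q m s) * logNorm f) := by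
  have bound := norm_setIntegral_le_logNorm_mul_logNorm (memLp_sq_mul_Q hm) hf
    (fun r hr => abs_Q_mul_re_le m (f r) hr) measurableSet_Ioc
    (Ioc_subset_Ioi_self : Ioc 0 r ⊆ Ioi 0)
  rw [AthetaQ_eq, intervalIntegral.integral_of_le hr.le, abs_mul, abs_neg, abs_of_pos one_half_pos]
  gcongr
  exact bound

lemma norm_AthetaQ_smul_Q_le (hm : 1 ≤ m) (hf : MemLp f 2 logMeasure) {r : ℝ} (hr : 0 < r) :
    ‖(2 * AthetaQ m f r) • (Q m r : ℂ)‖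
      ≤ (logNorm fun s => s ^ 2 * Q m s) * logNorm f * ‖Q m r‖ := by
  rw [norm_smul, Complex.norm_real, norm_mul, Real.norm_two]
  refine mul_le_mul_of_nonneg_right ?_ (norm_nonneg _)
  linarith [abs_AthetaQ_le hm hf hr, Real.norm_eq_abs (AthetaQ m f r)]

lemma tendsto_AthetaQ_zero (hm : 1 ≤ m) (hf : MemLp f 2 logMeasure) :
    Tendsto (AthetaQ m f) (𝓝[>] 0) (𝓝 0) := by
  have cont := intervalIntegral.continuousOn_primitive_interval'
    (intervalIntegrable_Q_mul_re hm hf zero_le_one) (a := 0) left_mem_uIcc 0 left_mem_uIcc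
  rw [ContinuousWithinAt, intervalIntegral.integral_same, uIcc_of_le zero_le_one] at cont
  have lim := (cont.mono_left (nhdsWithin_le_of_mem (Icc_mem_nhdsGT one_pos))).const_mul (-(1 / 2))
  rw [mul_zero] at lim
  exact lim.congr fun r => (AthetaQ_eq m f r).symm

lemma AthetaQ_sub (hm : 1 ≤ m) (hf : MemLp f 2 logMeasure) (hg : MemLp g 2 logMeasure)
    {r : ℝ} (hr : 0 ≤ r) :
    AthetaQ m (f - g) r = AthetaQ m f r - AthetaQ m g r := by
  simp only [AthetaQ_eq, Pi.sub_apply, Complex.sub_re, mul_sub, sub_mul]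
  rw [intervalIntegral.integral_sub (intervalIntegrable_Q_mul_re hm hf hr)
    (intervalIntegrable_Q_mul_re hm hg hr), mul_sub]

/-- A bound for the operator norm of `f ↦ r f' - r L_Q f` on `L²(dr / r)`. -/
def lowerOrderConst (m : ℕ) : ℝ := m + 2 + (logNorm fun s => s ^ 2 * Q m s) * logNorm (Q m)

lemma lowerOrderConst_nonneg (m : ℕ) : 0 ≤ lowerOrderConst m :=
  add_nonneg (by positivity) (mul_nonneg lpNorm_nonneg lpNorm_nonneg)

namespace MemLogH1

lemma hasDerivAt_AthetaQ (hm : 1 ≤ m) (hf : MemLogH1 f) {r : ℝ} (hr : 0 < r) :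
    HasDerivAt (AthetaQ m f) (-(1 / 2) * (Q m r * (f r).re * r)) r := by
  have hQ := (contDiff_Q m).continuous
  have hcont : ContinuousOn (fun s => Q m s * (f s).re * s) (Ioi 0) :=
    (hQ.continuousOn.mul (Complex.continuous_re.comp_continuousOn hf.contDiffOn.continuousOn)).mul
      continuousOn_id
  refine ((intervalIntegral.integral_hasDerivAt_right
    (intervalIntegrable_Q_mul_re hm hf.memLp hr.le)
    (hcont.stronglyMeasurableAtFilter isOpen_Ioi r hr)
    (hcont.continuousAt (Ioi_mem_nhds hr))).const_mul (-(1 / 2))).congr_of_eventuallyEq ?_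
  exact .of_forall (AthetaQ_eq m f)

lemma continuousOn_AthetaQ (hm : 1 ≤ m) (hf : MemLogH1 f) :
    ContinuousOn (AthetaQ m f) (Ioi 0) :=
  fun _ hr => (hf.hasDerivAt_AthetaQ hm hr).continuousAt.continuousWithinAt

lemma scaledLQ_sub (hm : 1 ≤ m) (hf : MemLogH1 f) (hg : MemLogH1 g) {r : ℝ} (hr : 0 < r) :
    scaledLQ m (f - g) r = scaledLQ m f r - scaledLQ m g r := by
  simp only [scaledLQ_eq m _ hr.ne', localLQ, AthetaQ_sub hm hf.memLp hg.memLp hr.le, Pi.sub_apply,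
    ((hf.hasDerivAt hr).sub (hg.hasDerivAt hr)).deriv]
  module

lemma memLp_AthetaQ_smul_Q (hm : 1 ≤ m) (hf : MemLogH1 f) :
    MemLp (fun r => (2 * AthetaQ m f r) • (Q m r : ℂ)) 2 logMeasure := by
  have hQ := (contDiff_Q m).continuous
  exact memLp_logMeasure_of_norm_le (ContinuousOn.aestronglyMeasurable
    ((continuousOn_const.mul (hf.continuousOn_AthetaQ hm)).smul (by fun_prop)) measurableSet_Ioi)
    (memLp_Q hm) fun r hr => norm_AthetaQ_smul_Q_le hm hf.memLp hr

lemma memLp_scaledLQ (hm : 1 ≤ m) (hf : MemLogH1 f) : MemLp (scaledLQ m f) 2 logMeasure :=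
  (hf.memLp_localLQ.sub (hf.memLp_AthetaQ_smul_Q hm)).ae_eq
    (ae_logMeasure_of_forall_pos fun _ hr => (scaledLQ_eq m f hr.ne').symm)

lemma logNorm_deriv_sub_scaledLQ_le (hm : 1 ≤ m) (hf : MemLogH1 f) :
    logNorm ((fun r => r • deriv f r) - scaledLQ m f)
      ≤ lowerOrderConst m * logNorm f := by
  have norm_le : logNorm ((fun r => r • deriv f r) - scaledLQ m f) ≤
      1 * logNorm ((fun r => (lamCoeff m r - 1) • f r)
        + fun r => (2 * AthetaQ m f r) • (Q m r : ℂ)) :=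
    logNorm_le_mul_of_norm_le zero_le_one
      ((memLp_lamCoeff_smul hf.memLp).add (hf.memLp_AthetaQ_smul_Q hm)) fun r hr => by
        rw [Pi.sub_apply, Pi.add_apply, scaledLQ_eq m f hr.ne', localLQ, one_mul, sub_sub,
          sub_sub_cancel]
  have local_le : logNorm (fun r => (lamCoeff m r - 1) • f r) ≤ (m + 2) * logNorm f :=
    logNorm_le_mul_of_norm_le (by positivity) hf.memLp
      fun r _ => norm_lamCoeff_sub_one_smul_le m r (f r)
  have nonlocal_le : logNorm (fun r => (2 * AthetaQ m f r) • (Q m r : ℂ))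
      ≤ ((logNorm fun s => s ^ 2 * Q m s) * logNorm f) * logNorm (Q m) :=
    logNorm_le_mul_of_norm_le (mul_nonneg lpNorm_nonneg lpNorm_nonneg) (memLp_Q hm)
      fun r hr => norm_AthetaQ_smul_Q_le hm hf.memLp hr
  have triangle := lpNorm_add_le (memLp_lamCoeff_smul (m := m) hf.memLp) one_le_two
    (g := fun r => (2 * AthetaQ m f r) • (Q m r : ℂ))
  rw [lowerOrderConst]
  linarith

lemma hasDerivAt_firstIntegral (hm : 1 ≤ m) (hf : MemLogH1 f) {r : ℝ} (hr : 0 < r) :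
    HasDerivAt (firstIntegral m f) (Q m r * (scaledLQ m f r).re * r) r := by
  have hre : HasDerivAt (fun s => (f s).re) (deriv f r).re r :=
    Complex.reCLM.hasFDerivAt.comp_hasDerivAt r (hf.hasDerivAt hr)
  refine ((((hasDerivAt_pow 2 r).mul (hasDerivAt_Q m hr.ne')).mul hre).add
    (((hasDerivAt_lamCoeff m r).const_mul 4).mul (hf.hasDerivAt_AthetaQ hm hr))).congr_deriv ?_
  rw [scaledLQ_eq m f hr.ne', localLQ]
  simp only [Complex.sub_re, Complex.real_smul, Complex.re_ofReal_mul, Complex.ofReal_re]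
  field_simp
  simp only [Nat.cast_ofNat, Nat.add_one_sub_one, pow_one, Pi.mul_apply]
  ring

lemma tendsto_firstIntegral_zero (hm : 1 ≤ m) (hf : MemLogH1 f) :
    Tendsto (firstIntegral m f) (𝓝[>] 0) (𝓝 0) := by
  have hQ := (contDiff_Q m).continuous
  have weight : Tendsto (fun r => r ^ 2 * Q m r) (𝓝[>] 0) (𝓝 0) := by
    have : Continuous fun r => r ^ 2 * Q m r := by fun_prop
    simpa using (this.tendsto 0).mono_left nhdsWithin_le_nhds
  have re_bounded : IsBoundedUnder (· ≤ ·) (𝓝[>] 0) fun r => ‖(f r).re‖ := by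
    refine isBoundedUnder_of_eventually_le
      (a := √(‖f 1‖ ^ 2 + 2 * (logNorm f * logNorm fun s => s • deriv f s))) ?_
    filter_upwards [self_mem_nhdsWithin] with r hr
    exact (Complex.abs_re_le_norm _).trans (Real.le_sqrt_of_sq_le (hf.norm_sq_le hr))
  have coeff : Tendsto (fun r => 4 * lamCoeff m r) (𝓝[>] 0) (𝓝 (4 * lamCoeff m 0)) :=
    (((contDiff_lamCoeff m).continuous.tendsto 0).const_mul 4).mono_left nhdsWithin_le_nhds
  have lim := (weight.zero_mul_isBoundedUnder_le re_bounded).add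
    (coeff.mul (tendsto_AthetaQ_zero hm hf.memLp))
  rwa [mul_zero, add_zero] at lim

lemma abs_firstIntegral_le (hm : 1 ≤ m) (hf : MemLogH1 f) {r : ℝ} (hr : 0 < r) :
    |firstIntegral m f r| ≤ (logNorm fun s => s ^ 2 * Q m s) * logNorm (scaledLQ m f) := by
  have dominated := fun s (hs : 0 < s) => abs_Q_mul_re_le m (scaledLQ m f s) hs
  have integrable : IntervalIntegrable (fun s => Q m s * (scaledLQ m f s).re * s) volume 0 r :=
    intervalIntegrable_Q_mul_re hm (hf.memLp_scaledLQ hm) hr.le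
  have ftc := intervalIntegral.integral_eq_sub_of_hasDerivAt_of_tendsto hr
    (fun s hs => hf.hasDerivAt_firstIntegral hm hs.1) integrable (hf.tendsto_firstIntegral_zero hm)
    ((hf.hasDerivAt_firstIntegral hm hr).continuousAt.tendsto.mono_left nhdsWithin_le_nhds)
  rw [sub_zero, intervalIntegral.integral_of_le hr.le] at ftc
  rw [← ftc]
  exact norm_setIntegral_le_logNorm_mul_logNorm (memLp_sq_mul_Q hm) (hf.memLp_scaledLQ hm)
    dominated measurableSet_Ioc Ioc_subset_Ioi_self

end MemLogH1

end Operator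

lemma monotoneOn_div_of_le_deriv {w w' e c : ℝ → ℝ}
    (hw : ∀ r, 0 < r → HasDerivAt w (w' r) r) (he : ∀ r, 0 < r → HasDerivAt e (c r * e r) r)
    (he_pos : ∀ r, 0 < r → 0 < e r) (hle : ∀ r, 0 < r → c r * w r ≤ w' r) :
    MonotoneOn (fun r => w r / e r) (Ioi 0) := by
  have hderiv : ∀ r, 0 < r → HasDerivAt (fun r => w r / e r) ((w' r - c r * w r) / e r) r :=
    fun r hr => ((hw r hr).div (he r hr) (he_pos r hr).ne').congr_deriv (by
      have := (he_pos r hr).ne'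
      field_simp)
  refine monotoneOn_of_deriv_nonneg (convex_Ioi 0)
    (fun r hr => (hderiv r hr).continuousAt.continuousWithinAt) ?_ ?_ <;> rw [interior_Ioi]
  · exact fun r hr => (hderiv r hr).differentiableAt.differentiableWithinAt
  · intro r hr
    rw [(hderiv r hr).deriv]
    exact div_nonneg (sub_nonneg.2 (hle r hr)) (he_pos r hr).le

section Coercivity

variable {m : ℕ} {f : ℝ → ℂ}

/-- The constant in the bound of the distance to the kernel of `L_Q` by `‖r L_Q f‖`. -/
def kernelDistConst (m : ℕ) : ℝ :=
  3 * (logNorm fun s => s ^ 2 * Q m s) / Q m 1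
    + 2 * (1 + (logNorm fun s => s ^ 2 * Q m s) * logNorm (Q m))

lemma kernelDistConst_nonneg (m : ℕ) : 0 ≤ kernelDistConst m := by
  have := Q_pos m one_pos
  have : 0 ≤ logNorm (Q m) := lpNorm_nonneg
  have : 0 ≤ logNorm fun s => s ^ 2 * Q m s := lpNorm_nonneg
  rw [kernelDistConst]
  positivity

namespace MemLogH1

lemma hasDerivAt_AthetaQ_eq_firstIntegral (hm : 1 ≤ m) (hf : MemLogH1 f) {r : ℝ} (hr : 0 < r) :
    HasDerivAt (AthetaQ m f)
      ((2 * lamCoeff m r * AthetaQ m f r - firstIntegral m f r / 2) / r) r := by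
  refine (hf.hasDerivAt_AthetaQ hm hr).congr_deriv ?_
  rw [firstIntegral]
  field_simp
  ring

-- `-b` is a supersolution of `r w' = 2 b w + (m+1)²`, and `(rQ)²` solves the homogeneous equation.
lemma monotoneOn_barrier (hm : 1 ≤ m) (hf : MemLogH1 f) {p σ : ℝ}
    (hp : ∀ r, 0 < r → |firstIntegral m f r| ≤ p) (hσ : |σ| = 1) :
    MonotoneOn (fun r => (σ * (2 * (m + 1) ^ 2 * AthetaQ m f r) - p * lamCoeff m r)
      / (r * Q m r) ^ 2) (Ioi 0) := by
  refine monotoneOn_div_of_le_deriv (c := fun r => 2 * lamCoeff m r / r)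
    (fun r hr => (((hf.hasDerivAt_AthetaQ_eq_firstIntegral hm hr).const_mul _).const_mul σ).sub
      ((hasDerivAt_lamCoeff m r).const_mul p))
    (fun r hr => (hasDerivAt_mul_Q_sq m hr.ne').congr_deriv (by ring))
    (fun r hr => by have := Q_pos m hr; positivity) fun r hr => ?_
  have source_le : σ * firstIntegral m f r ≤ p :=
    (le_abs_self _).trans (by rw [abs_mul, hσ, one_mul]; exact hp r hr)
  rw [← sub_nonneg]
  have gap : 0 ≤ (m + 1) ^ 2 * (p - σ * firstIntegral m f r) + p * lamCoeff m r ^ 2 := by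
    have := sub_nonneg.2 source_le
    have : 0 ≤ p := (abs_nonneg _).trans (hp r hr)
    positivity
  refine (div_nonneg gap hr.le).trans_eq ?_
  field_simp
  linear_combination (-2 * p) * lamCoeff_sq_add m r

lemma abs_AthetaQ_le_of_AthetaQ_one (hm : 1 ≤ m) (hf : MemLogH1 f) (hA : AthetaQ m f 1 = 0)
    {p : ℝ} (hp : ∀ r, 0 < r → |firstIntegral m f r| ≤ p) {r : ℝ} (hr : 0 < r) :
    2 * |AthetaQ m f r| ≤ p := by
  have rQ_sq_pos : 0 < (r * Q m r) ^ 2 := by have := Q_pos m hr; positivity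
  have one_mem : (1:ℝ) ∈ Ioi 0 := mem_Ioi.2 one_pos
  have p_nonneg : 0 ≤ p := (abs_nonneg _).trans (hp r hr)
  have barrier : |2 * (m + 1) ^ 2 * AthetaQ m f r| ≤ p * |lamCoeff m r| := by
    rcases le_total r 1 with hr1 | hr1
    · have below {σ : ℝ} (hσ : |σ| = 1) := hf.monotoneOn_barrier hm hp hσ hr one_mem hr1
      simp only [hA, lamCoeff_one, mul_zero, sub_zero, zero_div, div_le_iff₀ rQ_sq_pos, zero_mul,
        sub_nonpos] at below
      rw [abs_of_nonneg (lamCoeff_nonneg m hr.le hr1), abs_le']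
      exact ⟨by simpa only [one_mul] using below abs_one,
        by simpa only [neg_one_mul] using below (σ := -1) (by rw [abs_neg, abs_one])⟩
    · have above {σ : ℝ} (hσ : |σ| = 1) := hf.monotoneOn_barrier hm hp hσ one_mem hr hr1
      simp only [hA, lamCoeff_one, mul_zero, sub_zero, zero_div, le_div_iff₀ rQ_sq_pos, zero_mul,
        sub_nonneg] at above
      rw [abs_of_nonpos (lamCoeff_nonpos m hr1), mul_neg, abs_le', neg_le_neg_iff]
      refine ⟨?_, by simpa only [one_mul] using above abs_one⟩
      linarith [above (σ := -1) (by rw [abs_neg, abs_one])]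
  rw [abs_mul, abs_of_nonneg (by positivity)] at barrier
  have b_le := mul_le_mul_of_nonneg_left (abs_lamCoeff_le m r) p_nonneg
  have : (m + 1 : ℝ) * (2 * |AthetaQ m f r| * (m + 1)) ≤ (m + 1) * p := by linarith
  nlinarith [le_of_mul_le_mul_left this (by positivity), abs_nonneg (AthetaQ m f r)]

lemma norm_apply_one_le (hm : 1 ≤ m) (hf : MemLogH1 f) (him : (f 1).im = 0) :
    ‖f 1‖ ≤ (logNorm fun s => s ^ 2 * Q m s) * logNorm (scaledLQ m f) / Q m 1 := by
  have Q_one_pos := Q_pos m one_pos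
  have bound := hf.abs_firstIntegral_le hm one_pos
  rw [firstIntegral, lamCoeff_one, mul_zero, zero_mul, add_zero, one_pow, one_mul, abs_mul,
    abs_of_pos Q_one_pos, mul_comm] at bound
  rwa [← Complex.abs_re_eq_norm.2 him, le_div_iff₀ Q_one_pos]

lemma logNorm_localLQ_le (hm : 1 ≤ m) (hf : MemLogH1 f) (hA : AthetaQ m f 1 = 0) :
    logNorm (localLQ m f)
      ≤ (1 + (logNorm fun s => s ^ 2 * Q m s) * logNorm (Q m)) * logNorm (scaledLQ m f) := by
  set p := (logNorm fun s => s ^ 2 * Q m s) * logNorm (scaledLQ m f)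
  have p_nonneg : 0 ≤ p := mul_nonneg lpNorm_nonneg lpNorm_nonneg
  have nonlocal_le : logNorm (fun r => (2 * AthetaQ m f r) • (Q m r : ℂ)) ≤ p * logNorm (Q m) :=
    logNorm_le_mul_of_norm_le p_nonneg (memLp_Q hm) fun r hr => by
      rw [norm_smul, Complex.norm_real, norm_mul, Real.norm_two]
      gcongr
      exact hf.abs_AthetaQ_le_of_AthetaQ_one hm hA (fun s hs => hf.abs_firstIntegral_le hm hs) hr
  have decomposition : logNorm (localLQ m f)
      ≤ 1 * logNorm (scaledLQ m f + fun r => (2 * AthetaQ m f r) • (Q m r : ℂ)) :=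
    logNorm_le_mul_of_norm_le zero_le_one
      ((hf.memLp_scaledLQ hm).add (hf.memLp_AthetaQ_smul_Q hm)) fun r hr => by
        rw [Pi.add_apply, scaledLQ_eq m f hr.ne', sub_add_cancel, one_mul]
  have triangle := lpNorm_add_le (hf.memLp_scaledLQ hm) one_le_two
    (g := fun r => (2 * AthetaQ m f r) • (Q m r : ℂ))
  linarith

lemma logNorm_le_of_normalized (hm : 1 ≤ m) (hf : MemLogH1 f) (hA : AthetaQ m f 1 = 0)
    (him : (f 1).im = 0) : logNorm f ≤ kernelDistConst m * logNorm (scaledLQ m f) :=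
  calc logNorm f ≤ 3 * ‖f 1‖ + 2 * logNorm (localLQ m f) := hf.logNorm_le_boundary_add_localLQ hm
    _ ≤ 3 * ((logNorm fun s => s ^ 2 * Q m s) * logNorm (scaledLQ m f) / Q m 1)
        + 2 * ((1 + (logNorm fun s => s ^ 2 * Q m s) * logNorm (Q m)) *
          logNorm (scaledLQ m f)) := by
      gcongr
      exacts [hf.norm_apply_one_le hm him, hf.logNorm_localLQ_le hm hA]
    _ = kernelDistConst m * logNorm (scaledLQ m f) := by
      rw [kernelDistConst]
      ring

end MemLogH1

end Coercivity

section Kernel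

variable {m : ℕ} {f : ℝ → ℂ}

/-- The element `α ΛQ + β iQ` of the kernel of `L_Q`, written through `ΛQ = b Q`. -/
def kernelVector (m : ℕ) (α β : ℝ) (r : ℝ) : ℂ := ((α * lamCoeff m r : ℝ) + β * Complex.I) * Q m r

lemma kernelVector_eq (α β : ℝ) {r : ℝ} (hr : r ≠ 0) :
    kernelVector m α β r = α * (LamQ m r : ℂ) + β * (Complex.I * Q m r) := by
  rw [kernelVector, LamQ_eq m hr]
  push_cast
  ring

lemma kernelVector_re (α β r : ℝ) : (kernelVector m α β r).re = α * (lamCoeff m r * Q m r) := by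
  rw [kernelVector, Complex.re_mul_ofReal, Complex.add_re, Complex.ofReal_re, Complex.re_ofReal_mul,
    Complex.I_re, mul_zero, add_zero, mul_assoc]

lemma kernelVector_im (α β r : ℝ) : (kernelVector m α β r).im = β * Q m r := by
  rw [kernelVector, Complex.im_mul_ofReal, Complex.add_im, Complex.ofReal_im, Complex.im_ofReal_mul,
    Complex.I_im, mul_one, zero_add]

lemma norm_kernelVector_le (α β r : ℝ) :
    ‖kernelVector m α β r‖ ≤ (|α| * (m + 1) + |β|) * ‖Q m r‖ := by
  rw [kernelVector, norm_mul, Complex.norm_real]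
  gcongr
  refine (norm_add_le _ _).trans ?_
  rw [Complex.norm_real, norm_mul, norm_mul, Complex.norm_I, mul_one, Complex.norm_real]
  gcongr
  · exact le_rfl
  · exact abs_lamCoeff_le m r
  · exact le_rfl

lemma hasDerivAt_kernelVector (α β : ℝ) {r : ℝ} (hr : r ≠ 0) :
    HasDerivAt (kernelVector m α β)
      (r⁻¹ • ((lamCoeff m r - 1) • kernelVector m α β r - (α / 2 * (r * Q m r) ^ 2) • (Q m r : ℂ)))
      r := by
  have coeff := ((hasDerivAt_lamCoeff m r).const_mul α).ofReal_comp.add_const (β * Complex.I)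
  refine (coeff.mul (hasDerivAt_Q m hr).ofReal_comp).congr_deriv ?_
  have hr' : (r : ℂ) ≠ 0 := by exact_mod_cast hr
  simp only [kernelVector, Complex.real_smul]
  push_cast
  field_simp
  ring

lemma localLQ_kernelVector (α β : ℝ) {r : ℝ} (hr : r ≠ 0) :
    localLQ m (kernelVector m α β) r = -(α / 2 * (r * Q m r) ^ 2) • (Q m r : ℂ) := by
  rw [localLQ, (hasDerivAt_kernelVector α β hr).deriv, smul_inv_smul₀ hr, sub_sub_cancel_left,
    neg_smul]

lemma AthetaQ_kernelVector (α β : ℝ) {r : ℝ} (hr : 0 < r) :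
    AthetaQ m (kernelVector m α β) r = -(α / 4) * (r * Q m r) ^ 2 := by
  have hQ := (contDiff_Q m).continuous
  have hb := (contDiff_lamCoeff m).continuous
  have ftc := intervalIntegral.integral_eq_sub_of_hasDerivAt_of_le hr.le
    (f := fun s => (s * Q m s) ^ 2) (f' := fun s => 2 * (lamCoeff m s * Q m s ^ 2 * s))
    (by fun_prop) (fun s hs => (hasDerivAt_mul_Q_sq m hs.1.ne').congr_deriv (by
      have := hs.1.ne'
      field_simp)) (Continuous.intervalIntegrable (by fun_prop) _ _)
  rw [intervalIntegral.integral_const_mul, zero_mul, zero_pow two_ne_zero, sub_zero] at ftc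
  have integrand (s : ℝ) : Q m s * (kernelVector m α β s).re * s
      = α * (lamCoeff m s * Q m s ^ 2 * s) := by
    rw [kernelVector_re]
    ring
  simp only [AthetaQ_eq, integrand, intervalIntegral.integral_const_mul]
  linear_combination (-α / 4) * ftc

lemma scaledLQ_kernelVector (α β : ℝ) {r : ℝ} (hr : 0 < r) :
    scaledLQ m (kernelVector m α β) r = 0 := by
  rw [scaledLQ_eq m _ hr.ne', localLQ_kernelVector α β hr.ne', AthetaQ_kernelVector α β hr,
    ← sub_smul]
  ring_nf
  exact zero_smul ℝ _

lemma memLogH1_kernelVector (hm : 1 ≤ m) (α β : ℝ) : MemLogH1 (kernelVector m α β) := by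
  have hQ := contDiff_Q m
  have smooth : ContDiff ℝ 1 (kernelVector m α β) :=
    ((Complex.ofRealCLM.contDiff.comp (contDiff_const.mul (contDiff_lamCoeff m))).add
      contDiff_const).mul (Complex.ofRealCLM.contDiff.comp hQ)
  have memLp : MemLp (kernelVector m α β) 2 logMeasure := memLp_logMeasure_of_norm_le
    smooth.continuous.aestronglyMeasurable (memLp_Q hm) fun r _ => norm_kernelVector_le α β r
  have source_memLp : MemLp (fun r => (α / 2 * (r * Q m r) ^ 2) • (Q m r : ℂ)) 2 logMeasure := by
    refine memLp_logMeasure_of_norm_le (C := |α| * (m + 1) ^ 2)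
      (Continuous.aestronglyMeasurable (by have := hQ.continuous; fun_prop)) (memLp_Q hm)
      fun r _ => ?_
    rw [norm_smul, Complex.norm_real, Real.norm_eq_abs (_ * _), abs_mul, abs_div, abs_two, abs_sq]
    refine mul_le_mul_of_nonneg_right ?_ (norm_nonneg _)
    nlinarith [lamCoeff_sq_add m r, sq_nonneg (lamCoeff m r), abs_nonneg α]
  refine ⟨smooth.contDiffOn, memLp, ((memLp_lamCoeff_smul (m := m) memLp).sub source_memLp).ae_eq
    (ae_logMeasure_of_forall_pos fun r hr => ?_)⟩
  simp only [Pi.sub_apply, (hasDerivAt_kernelVector α β hr.ne').deriv, smul_inv_smul₀ hr.ne']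

lemma logNorm_kernelVector_le (hm : 1 ≤ m) (α β : ℝ) :
    logNorm (kernelVector m α β) ≤ (|α| * (m + 1) + |β|) * logNorm (Q m) :=
  logNorm_le_mul_of_norm_le (by positivity) (memLp_Q hm) fun r _ => norm_kernelVector_le α β r

lemma MemLogH1.exists_logNorm_sub_kernelVector_le (hm : 1 ≤ m) (hf : MemLogH1 f) :
    ∃ α β : ℝ, logNorm (f - kernelVector m α β) ≤ kernelDistConst m * logNorm (scaledLQ m f) := by
  have Q_one_ne := (Q_pos m one_pos).ne'
  let α := -4 * AthetaQ m f 1 / Q m 1 ^ 2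
  let β := (f 1).im / Q m 1
  have hk := memLogH1_kernelVector hm α β
  have potential_eq_zero : AthetaQ m (f - kernelVector m α β) 1 = 0 := by
    rw [AthetaQ_sub hm hf.memLp hk.memLp zero_le_one, AthetaQ_kernelVector α β one_pos]
    simp only [α]
    field_simp
    ring
  have im_eq_zero : ((f - kernelVector m α β) 1).im = 0 := by
    rw [Pi.sub_apply, Complex.sub_im, kernelVector_im, div_mul_cancel₀ _ Q_one_ne, sub_self]
  have image_le : logNorm (scaledLQ m (f - kernelVector m α β)) ≤ 1 * logNorm (scaledLQ m f) :=
    logNorm_le_mul_of_norm_le zero_le_one (hf.memLp_scaledLQ hm) fun r hr => by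
      rw [hf.scaledLQ_sub hm hk hr, scaledLQ_kernelVector α β hr, sub_zero, one_mul]
  rw [one_mul] at image_le
  exact ⟨α, β, ((hf.sub hk).logNorm_le_of_normalized hm potential_eq_zero im_eq_zero).trans
    (mul_le_mul_of_nonneg_left image_le (kernelDistConst_nonneg m))⟩

end Kernel

section InnerProduct

variable {m : ℕ} {f g Z : ℝ → ℂ}

lemma norm_iprod_integrand (f Z : ℝ → ℂ) {r : ℝ} (hr : 0 < r) :
    ‖f r * (starRingEnd ℂ) (Z r) * (r : ℂ)‖ = ‖f r‖ * ‖r ^ 2 • Z r‖ / r := by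
  rw [norm_mul, norm_mul, RCLike.norm_conj, Complex.norm_real, norm_smul, norm_pow,
    Real.norm_of_nonneg hr.le]
  field_simp

lemma abs_iprod_le (hf : MemLp f 2 logMeasure)
    (hZ : MemLp (fun r => r ^ 2 • Z r) 2 logMeasure) :
    |iprod f Z| ≤ 2 * Real.pi * (logNorm f * logNorm fun r => r ^ 2 • Z r) := by
  rw [iprod, abs_mul, abs_of_pos Real.two_pi_pos]
  gcongr
  exact (Complex.abs_re_le_norm _).trans (norm_setIntegral_le_logNorm_mul_logNorm hf hZ
    (fun r hr => (norm_iprod_integrand f Z hr).le) measurableSet_Ioi subset_rfl)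

lemma iprod_congr (h : ∀ r, 0 < r → f r = g r) (Z : ℝ → ℂ) : iprod f Z = iprod g Z := by
  have integral_eq : ∫ r in Ioi 0, f r * (starRingEnd ℂ) (Z r) * (r : ℂ)
      = ∫ r in Ioi 0, g r * (starRingEnd ℂ) (Z r) * (r : ℂ) :=
    setIntegral_congr_fun measurableSet_Ioi fun r hr => by simp only [h r hr]
  rw [iprod, iprod, integral_eq]

lemma iprod_real_smul (c : ℝ) (f Z : ℝ → ℂ) : iprod (c • f) Z = c * iprod f Z := by
  simp only [iprod, Pi.smul_apply, smul_mul_assoc, integral_smul, Complex.smul_re, smul_eq_mul]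
  ring

lemma iprod_add (hf : MemLp f 2 logMeasure) (hg : MemLp g 2 logMeasure)
    (hZ : AEStronglyMeasurable Z (volume.restrict (Ioi 0)))
    (hZ_memLp : MemLp (fun r => r ^ 2 • Z r) 2 logMeasure) :
    iprod (f + g) Z = iprod f Z + iprod g Z := by
  have integrable {u : ℝ → ℂ} (hu : MemLp u 2 logMeasure) :
      IntegrableOn (fun r => u r * (starRingEnd ℂ) (Z r) * (r : ℂ)) (Ioi 0) :=
    integrableOn_of_norm_le_mul_div hu hZ_memLp (fun r hr => (norm_iprod_integrand u Z hr).le)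
      (((aestronglyMeasurable_logMeasure_iff.1 hu.1).mul
        (Complex.continuous_conj.comp_aestronglyMeasurable hZ)).mul
        Complex.continuous_ofReal.aestronglyMeasurable)
  simp only [iprod, Pi.add_apply, add_mul]
  rw [integral_add (integrable hf) (integrable hg), Complex.add_re, mul_add]

lemma iprod_kernelVector (hm : 1 ≤ m) (α β : ℝ)
    (hZ : AEStronglyMeasurable Z (volume.restrict (Ioi 0)))
    (hZ_memLp : MemLp (fun r => r ^ 2 • Z r) 2 logMeasure) :
    iprod (kernelVector m α β) Z = α * iprod (fun r => (LamQ m r : ℂ)) Z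
      + β * iprod (fun r => Complex.I * (Q m r : ℂ)) Z := by
  have hscaling := (memLogH1_kernelVector hm 1 0).memLp.const_smul α
  have hphase := (memLogH1_kernelVector hm 0 1).memLp.const_smul β
  have decomposition : kernelVector m α β = α • kernelVector m 1 0 + β • kernelVector m 0 1 := by
    ext r
    simp only [kernelVector, Pi.add_apply, Pi.smul_apply, Complex.real_smul]
    push_cast
    ring
  have scaling_eq : iprod (kernelVector m 1 0) Z = iprod (fun r => (LamQ m r : ℂ)) Z :=
    iprod_congr (fun r hr => by simp [kernelVector_eq _ _ hr.ne']) Z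
  have phase_eq : iprod (kernelVector m 0 1) Z = iprod (fun r => Complex.I * (Q m r : ℂ)) Z :=
    iprod_congr (fun r hr => by simp [kernelVector_eq _ _ hr.ne']) Z
  rw [decomposition, iprod_add hscaling hphase hZ hZ_memLp, iprod_real_smul, iprod_real_smul,
    scaling_eq, phase_eq]

lemma abs_le_of_linear_system {a₁ b₁ a₂ b₂ x y e₁ e₂ : ℝ} (hdet : a₁ * b₂ - b₁ * a₂ ≠ 0)
    (h₁ : |x * a₁ + y * b₁| ≤ e₁) (h₂ : |x * a₂ + y * b₂| ≤ e₂) :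
    |x| ≤ (e₁ * |b₂| + e₂ * |b₁|) / |a₁ * b₂ - b₁ * a₂| := by
  rw [le_div_iff₀ (abs_pos.2 hdet), ← abs_mul]
  calc |x * (a₁ * b₂ - b₁ * a₂)| = |(x * a₁ + y * b₁) * b₂ - (x * a₂ + y * b₂) * b₁| := by
        congr 1
        ring
    _ ≤ |x * a₁ + y * b₁| * |b₂| + |x * a₂ + y * b₂| * |b₁| := by
        rw [← abs_mul, ← abs_mul]
        exact abs_sub _ _
    _ ≤ e₁ * |b₂| + e₂ * |b₁| := by gcongr

end InnerProduct

section Orthogonality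

variable {m : ℕ} {Z Z₁ Z₂ : ℝ → ℂ}

lemma memLp_sq_smul_of_integrableOn (hZ : AEStronglyMeasurable Z (volume.restrict (Ioi 0)))
    (hZ_int : IntegrableOn (fun r => ‖Z r‖ ^ 2 * r ^ 3) (Ioi 0)) :
    MemLp (fun r => r ^ 2 • Z r) 2 logMeasure := by
  have meas : AEStronglyMeasurable (fun r => r ^ 2 • Z r) (volume.restrict (Ioi 0)) :=
    (continuous_pow 2).aestronglyMeasurable.smul hZ
  refine (memLp_logMeasure_iff meas).2 (hZ_int.congr_fun (fun r hr => ?_) measurableSet_Ioi)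
  have : r ≠ 0 := (mem_Ioi.1 hr).ne'
  simp only [norm_smul, norm_pow, Real.norm_eq_abs, sq_abs]
  field_simp

lemma abs_iprod_kernelVector_le {f : ℝ → ℂ} (hm : 1 ≤ m) (hf : MemLp f 2 logMeasure)
    (hZ : AEStronglyMeasurable Z (volume.restrict (Ioi 0)))
    (hZ_memLp : MemLp (fun r => r ^ 2 • Z r) 2 logMeasure) (horth : iprod f Z = 0) (α β : ℝ) :
    |iprod (kernelVector m α β) Z|
      ≤ 2 * Real.pi * (logNorm (f - kernelVector m α β) * logNorm fun r => r ^ 2 • Z r) := by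
  have hk := (memLogH1_kernelVector hm α β).memLp
  have split := iprod_add (hf.sub hk) hk hZ hZ_memLp
  rw [sub_add_cancel, horth] at split
  rw [show iprod (kernelVector m α β) Z = -iprod (f - kernelVector m α β) Z by linarith, abs_neg]
  exact abs_iprod_le (hf.sub hk) hZ_memLp

-- By Cramer's rule the two orthogonality conditions bound `α` and `β` by `f - kernelVector m α β`.
lemma exists_logNorm_le_mul_logNorm_sub_kernelVector (hm : 1 ≤ m)
    (hZ₁ : AEStronglyMeasurable Z₁ (volume.restrict (Ioi 0)))
    (hZ₂ : AEStronglyMeasurable Z₂ (volume.restrict (Ioi 0)))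
    (hZ₁_memLp : MemLp (fun r => r ^ 2 • Z₁ r) 2 logMeasure)
    (hZ₂_memLp : MemLp (fun r => r ^ 2 • Z₂ r) 2 logMeasure)
    (hdet : iprod (fun r => (LamQ m r : ℂ)) Z₁ * iprod (fun r => Complex.I * (Q m r : ℂ)) Z₂
        - iprod (fun r => Complex.I * (Q m r : ℂ)) Z₁ * iprod (fun r => (LamQ m r : ℂ)) Z₂ ≠ 0) :
    ∃ K, 0 ≤ K ∧ ∀ f : ℝ → ℂ, MemLp f 2 logMeasure → iprod f Z₁ = 0 → iprod f Z₂ = 0 →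
      ∀ α β : ℝ, logNorm f ≤ K * logNorm (f - kernelVector m α β) := by
  set a₁ := iprod (fun r => (LamQ m r : ℂ)) Z₁
  set a₂ := iprod (fun r => (LamQ m r : ℂ)) Z₂
  set b₁ := iprod (fun r => Complex.I * (Q m r : ℂ)) Z₁
  set b₂ := iprod (fun r => Complex.I * (Q m r : ℂ)) Z₂
  set z₁ := logNorm fun r => r ^ 2 • Z₁ r
  set z₂ := logNorm fun r => r ^ 2 • Z₂ r
  have z₁_nonneg : 0 ≤ z₁ := lpNorm_nonneg
  have z₂_nonneg : 0 ≤ z₂ := lpNorm_nonneg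
  have norm_Q_nonneg : 0 ≤ logNorm (Q m) := lpNorm_nonneg
  set A := 2 * Real.pi * (z₁ * |b₂| + z₂ * |b₁|) / |a₁ * b₂ - b₁ * a₂| with hA
  set B := 2 * Real.pi * (z₁ * |a₂| + z₂ * |a₁|) / |b₁ * a₂ - a₁ * b₂| with hB
  have hdet' : b₁ * a₂ - a₁ * b₂ ≠ 0 := fun h => hdet (by linarith)
  refine ⟨1 + (A * (m + 1) + B) * logNorm (Q m), by positivity, fun f hf h₁ h₂ α β => ?_⟩
  set t := logNorm (f - kernelVector m α β)
  have e₁ := abs_iprod_kernelVector_le hm hf hZ₁ hZ₁_memLp h₁ α β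
  have e₂ := abs_iprod_kernelVector_le hm hf hZ₂ hZ₂_memLp h₂ α β
  rw [iprod_kernelVector hm α β hZ₁ hZ₁_memLp] at e₁
  rw [iprod_kernelVector hm α β hZ₂ hZ₂_memLp] at e₂
  have α_le : |α| ≤ A * t := (abs_le_of_linear_system hdet e₁ e₂).trans_eq (by rw [hA]; ring)
  have β_le : |β| ≤ B * t := (abs_le_of_linear_system hdet' (add_comm (α * a₁) _ ▸ e₁)
    (add_comm (α * a₂) _ ▸ e₂)).trans_eq (by rw [hB]; ring)
  have hk := (memLogH1_kernelVector hm α β).memLp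
  calc logNorm f = logNorm (f - kernelVector m α β + kernelVector m α β) := by rw [sub_add_cancel]
    _ ≤ t + logNorm (kernelVector m α β) := lpNorm_add_le (hf.sub hk) one_le_two
    _ ≤ t + (|α| * (m + 1) + |β|) * logNorm (Q m) := by
      gcongr
      exact logNorm_kernelVector_le hm α β
    _ ≤ t + (A * t * (m + 1) + B * t) * logNorm (Q m) := by gcongr
    _ = (1 + (A * (m + 1) + B) * logNorm (Q m)) * t := by ring

end Orthogonality

section EnergyNorms

variable {m : ℕ} {f : ℝ → ℂ}

lemma memLogH1_of_integrableOn (hm : 1 ≤ m) (hf : ContDiffOn ℝ 1 f (Ioi 0))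
    (hint : IntegrableOn (fun r => (‖deriv f r‖ ^ 2 + (m : ℝ) ^ 2 * ‖f r‖ ^ 2 / r ^ 2) * r)
      (Ioi 0)) : MemLogH1 f := by
  have hf_cont : ContinuousOn f (Ioi 0) := hf.continuousOn
  have hdf_cont : ContinuousOn (fun r => r • deriv f r) (Ioi 0) :=
    continuousOn_id.smul (hf.continuousOn_deriv_of_isOpen isOpen_Ioi le_rfl)
  have m_sq_ge : (1:ℝ) ≤ (m : ℝ) ^ 2 := one_le_pow₀ (by exact_mod_cast hm)
  have memLp_of_le {u : ℝ → ℂ} (hu : ContinuousOn u (Ioi 0))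
      (hle : ∀ r, 0 < r → ‖u r‖ ^ 2 ≤ r ^ 2 * ‖deriv f r‖ ^ 2 + m ^ 2 * ‖f r‖ ^ 2) :
      MemLp u 2 logMeasure := by
    refine (memLp_logMeasure_iff (hu.aestronglyMeasurable measurableSet_Ioi)).2 (hint.mono'
      (ContinuousOn.aestronglyMeasurable ((hu.norm.pow 2).div continuousOn_id fun r hr => hr.ne')
        measurableSet_Ioi) (ae_restrict_of_forall_mem measurableSet_Ioi fun r hr => ?_))
    have hr : 0 < r := hr
    rw [Real.norm_of_nonneg (by positivity), div_le_iff₀ hr]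
    refine (hle r hr).trans_eq ?_
    field_simp
  refine ⟨hf, memLp_of_le hf_cont fun r _ => ?_, memLp_of_le hdf_cont fun r _ => ?_⟩
  · nlinarith [mul_nonneg (sq_nonneg r) (sq_nonneg ‖deriv f r‖), sq_nonneg ‖f r‖]
  · rw [norm_smul, mul_pow, Real.norm_eq_abs, sq_abs]
    exact le_add_of_nonneg_right (by positivity)

lemma sqrt_L2sq_LQ (hm : 1 ≤ m) (hf : MemLogH1 f) :
    √(L2sq (LQ m f)) = √(2 * Real.pi) * logNorm (scaledLQ m f) := by
  have integral_eq : ∫ r in Ioi 0, ‖LQ m f r‖ ^ 2 * r = logNorm (scaledLQ m f) ^ 2 := by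
    rw [logNorm_sq (hf.memLp_scaledLQ hm).1]
    refine setIntegral_congr_fun measurableSet_Ioi fun r hr => ?_
    have : r ≠ 0 := (mem_Ioi.1 hr).ne'
    simp only [scaledLQ, norm_smul, mul_pow, Real.norm_eq_abs, sq_abs]
    field_simp
  rw [L2sq, integral_eq, Real.sqrt_mul Real.two_pi_pos.le, Real.sqrt_sq lpNorm_nonneg]

lemma sqrt_H1msq (m : ℕ) (hf : MemLogH1 f) :
    √(H1msq m f) = √(2 * Real.pi)
      * √((logNorm fun r => r • deriv f r) ^ 2 + (m * logNorm f) ^ 2) := by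
  have integral_eq : ∫ r in Ioi 0, (‖deriv f r‖ ^ 2 + (m : ℝ) ^ 2 * ‖f r‖ ^ 2 / r ^ 2) * r
      = (logNorm fun r => r • deriv f r) ^ 2 + (m * logNorm f) ^ 2 := by
    rw [mul_pow, logNorm_sq hf.memLp.1, logNorm_sq hf.memLp_deriv.1,
      ← integral_const_mul ((m : ℝ) ^ 2), ← integral_add
      (integrableOn_norm_sq_div_of_memLp hf.memLp_deriv)
      ((integrableOn_norm_sq_div_of_memLp hf.memLp).const_mul _)]
    refine setIntegral_congr_fun measurableSet_Ioi fun r hr => ?_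
    have : r ≠ 0 := (mem_Ioi.1 hr).ne'
    simp only [norm_smul, mul_pow, Real.norm_eq_abs, sq_abs]
    field_simp
  rw [H1msq, integral_eq, Real.sqrt_mul Real.two_pi_pos.le]

end EnergyNorms

section Main

variable {m : ℕ} {Z₁ Z₂ : ℝ → ℂ}

lemma exists_logNorm_le_mul_logNorm_scaledLQ (hm : 1 ≤ m)
    (hZ₁ : AEStronglyMeasurable Z₁ (volume.restrict (Ioi 0)))
    (hZ₂ : AEStronglyMeasurable Z₂ (volume.restrict (Ioi 0)))
    (hZ₁_memLp : MemLp (fun r => r ^ 2 • Z₁ r) 2 logMeasure)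
    (hZ₂_memLp : MemLp (fun r => r ^ 2 • Z₂ r) 2 logMeasure)
    (hdet : iprod (fun r => (LamQ m r : ℂ)) Z₁ * iprod (fun r => Complex.I * (Q m r : ℂ)) Z₂
        - iprod (fun r => Complex.I * (Q m r : ℂ)) Z₁ * iprod (fun r => (LamQ m r : ℂ)) Z₂ ≠ 0) :
    ∃ K, 0 ≤ K ∧ ∀ f : ℝ → ℂ, MemLogH1 f → iprod f Z₁ = 0 → iprod f Z₂ = 0 →
      logNorm f ≤ K * logNorm (scaledLQ m f) := by
  obtain ⟨K, hK, control⟩ :=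
    exists_logNorm_le_mul_logNorm_sub_kernelVector hm hZ₁ hZ₂ hZ₁_memLp hZ₂_memLp hdet
  refine ⟨K * kernelDistConst m, mul_nonneg hK (kernelDistConst_nonneg m),
    fun f hf h₁ h₂ => ?_⟩
  obtain ⟨α, β, dist_le⟩ := hf.exists_logNorm_sub_kernelVector_le hm
  calc logNorm f ≤ K * logNorm (f - kernelVector m α β) := control f hf.memLp h₁ h₂ α β
    _ ≤ K * (kernelDistConst m * logNorm (scaledLQ m f)) := by gcongr
    _ = K * kernelDistConst m * logNorm (scaledLQ m f) := by ring

lemma MemLogH1.sqrt_L2sq_LQ_le {f : ℝ → ℂ} (hm : 1 ≤ m) (hf : MemLogH1 f) :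
    √(L2sq (LQ m f)) ≤ (1 + lowerOrderConst m) * √(H1msq m f) := by
  set S := √((logNorm fun r => r • deriv f r) ^ 2 + (m * logNorm f) ^ 2)
  have deriv_le : (logNorm fun r => r • deriv f r) ≤ S :=
    Real.le_sqrt_of_sq_le (le_add_of_nonneg_right (sq_nonneg _))
  have norm_le : logNorm f ≤ S :=
    (le_mul_of_one_le_left lpNorm_nonneg (by exact_mod_cast hm)).trans
      (Real.le_sqrt_of_sq_le (le_add_of_nonneg_left (sq_nonneg _)))
  have triangle : logNorm (scaledLQ m f)
      ≤ (logNorm fun r => r • deriv f r)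
        + logNorm ((fun r => r • deriv f r) - scaledLQ m f) :=
    lpNorm_le_lpNorm_add_lpNorm_sub hf.memLp_deriv one_le_two
  rw [sqrt_L2sq_LQ hm hf, sqrt_H1msq m hf, mul_left_comm]
  gcongr
  calc logNorm (scaledLQ m f) ≤ (logNorm fun r => r • deriv f r) + lowerOrderConst m * logNorm f :=
        triangle.trans (by gcongr; exact hf.logNorm_deriv_sub_scaledLQ_le hm)
    _ ≤ S + lowerOrderConst m * S := by
        have := lowerOrderConst_nonneg m
        gcongr
    _ = (1 + lowerOrderConst m) * S := by ring

lemma MemLogH1.sqrt_H1msq_le {f : ℝ → ℂ} {K : ℝ} (hm : 1 ≤ m) (hf : MemLogH1 f)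
    (hfK : logNorm f ≤ K * logNorm (scaledLQ m f)) :
    √(H1msq m f) ≤ (1 + (lowerOrderConst m + m) * K) * √(L2sq (LQ m f)) := by
  have triangle : (logNorm fun r => r • deriv f r)
      ≤ logNorm (scaledLQ m f) + logNorm ((fun r => r • deriv f r) - scaledLQ m f) :=
    lpNorm_le_lpNorm_add_lpNorm_sub' (hf.memLp_scaledLQ hm) one_le_two
  rw [sqrt_L2sq_LQ hm hf, sqrt_H1msq m hf, mul_left_comm]
  gcongr
  have := lowerOrderConst_nonneg m
  calc √((logNorm fun r => r • deriv f r) ^ 2 + (m * logNorm f) ^ 2)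
      ≤ (logNorm fun r => r • deriv f r) + m * logNorm f := by
        have deriv_nonneg : 0 ≤ logNorm fun r => r • deriv f r := lpNorm_nonneg
        have norm_nonneg : 0 ≤ m * logNorm f := mul_nonneg m.cast_nonneg lpNorm_nonneg
        exact Real.sqrt_le_iff.2 ⟨by positivity, by nlinarith⟩
    _ ≤ (logNorm (scaledLQ m f) + lowerOrderConst m * logNorm f) + m * logNorm f := by
        gcongr
        exact triangle.trans (by gcongr; exact hf.logNorm_deriv_sub_scaledLQ_le hm)
    _ = logNorm (scaledLQ m f) + (lowerOrderConst m + m) * logNorm f := by ring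
    _ ≤ logNorm (scaledLQ m f) + (lowerOrderConst m + m) * (K * logNorm (scaledLQ m f)) := by gcongr
    _ = (1 + (lowerOrderConst m + m) * K) * logNorm (scaledLQ m f) := by ring

end Main

lemma integrableOn_norm_sq_mul_pow_of_hasCompactSupport {E : Type*} [NormedAddCommGroup E]
    {Z : ℝ → E} (hZ : Continuous Z) (hsupp : HasCompactSupport Z) (n : ℕ) (s : Set ℝ) :
    IntegrableOn (fun r => ‖Z r‖ ^ 2 * r ^ n) s :=
  have hsupp_sq : HasCompactSupport fun r => ‖Z r‖ ^ 2 :=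
    hsupp.comp_left (g := fun z => ‖z‖ ^ 2) (by simp)
  (Continuous.integrable_of_hasCompactSupport (by fun_prop) hsupp_sq.mul_right).integrableOn

theorem stmt15_general (m : ℕ) (hm : 1 ≤ m) (Z₁ Z₂ : ℝ → ℂ)
    (hZ₁ : AEStronglyMeasurable Z₁ (volume.restrict (Ioi 0)))
    (hZ₂ : AEStronglyMeasurable Z₂ (volume.restrict (Ioi 0)))
    (hint₁ : IntegrableOn (fun r => ‖Z₁ r‖ ^ 2 * r ^ 3) (Ioi 0))
    (hint₂ : IntegrableOn (fun r => ‖Z₂ r‖ ^ 2 * r ^ 3) (Ioi 0))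
    (hdet : iprod (fun r => (LamQ m r : ℂ)) Z₁ * iprod (fun r => Complex.I * (Q m r : ℂ)) Z₂
        - iprod (fun r => Complex.I * (Q m r : ℂ)) Z₁ * iprod (fun r => (LamQ m r : ℂ)) Z₂ ≠ 0) :
    ∃ c C : ℝ, 0 < c ∧ c ≤ C ∧
      ∀ f : ℝ → ℂ, ContDiffOn ℝ 1 f (Ioi 0) →
        IntegrableOn (fun r => (‖deriv f r‖ ^ 2 + (m : ℝ) ^ 2 * ‖f r‖ ^ 2 / r ^ 2) * r) (Ioi 0) →
        iprod f Z₁ = 0 → iprod f Z₂ = 0 →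
        c * √(H1msq m f) ≤ √(L2sq (LQ m f)) ∧ √(L2sq (LQ m f)) ≤ C * √(H1msq m f) := by
  obtain ⟨K, hK, coercive⟩ := exists_logNorm_le_mul_logNorm_scaledLQ hm hZ₁ hZ₂
    (memLp_sq_smul_of_integrableOn hZ₁ hint₁) (memLp_sq_smul_of_integrableOn hZ₂ hint₂) hdet
  have const_nonneg := lowerOrderConst_nonneg m
  set M := 1 + (lowerOrderConst m + m) * K
  have one_le_M : 1 ≤ M := le_add_of_nonneg_right (by positivity)
  refine ⟨M⁻¹, 1 + lowerOrderConst m, by positivity,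
    (inv_le_one_of_one_le₀ one_le_M).trans (le_add_of_nonneg_right const_nonneg),
    fun f hf_diff hf_int h₁ h₂ => ?_⟩
  have hf := memLogH1_of_integrableOn hm hf_diff hf_int
  exact ⟨(inv_mul_le_iff₀ (by positivity)).2 (hf.sqrt_H1msq_le hm (coercive f hf h₁ h₂)),
    hf.sqrt_L2sq_LQ_le hm⟩

end

/-- coercivity of the linearized Bogomol'nyi operator:
`‖L_Q f‖_{L²} ∼ ‖f‖_{Ḣ¹_m}` under the orthogonality conditions. -/
theorem stmt15 (m : ℕ) (hm : 1 ≤ m)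
    (Z₁ Z₂ : ℝ → ℂ)
    (hZ₁ : ContDiff ℝ (⊤ : ℕ∞) Z₁) (hZ₂ : ContDiff ℝ (⊤ : ℕ∞) Z₂)
    (hsupp₁ : HasCompactSupport Z₁ ∧ tsupport Z₁ ⊆ Set.Ioi 0)
    (hsupp₂ : HasCompactSupport Z₂ ∧ tsupport Z₂ ⊆ Set.Ioi 0)
    (hdet : iprod (fun r => (LamQ m r : ℂ)) Z₁ * iprod (fun r => Complex.I * (Q m r : ℂ)) Z₂
        - iprod (fun r => Complex.I * (Q m r : ℂ)) Z₁ * iprod (fun r => (LamQ m r : ℂ)) Z₂ ≠ 0) :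
    ∃ c C : ℝ, 0 < c ∧ c ≤ C ∧
      ∀ f : ℝ → ℂ, ContDiffOn ℝ 1 f (Set.Ioi 0) →
        IntegrableOn (fun r => (‖deriv f r‖ ^ 2 + (m : ℝ) ^ 2 * ‖f r‖ ^ 2 / r ^ 2) * r)
          (Set.Ioi (0:ℝ)) →
        iprod f Z₁ = 0 → iprod f Z₂ = 0 →
        c * Real.sqrt (H1msq m f) ≤ Real.sqrt (L2sq (LQ m f)) ∧
        Real.sqrt (L2sq (LQ m f)) ≤ C * Real.sqrt (H1msq m f) := by
  exact stmt15_general m hm Z₁ Z₂ hZ₁.continuous.aestronglyMeasurable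
    hZ₂.continuous.aestronglyMeasurable
    (integrableOn_norm_sq_mul_pow_of_hasCompactSupport hZ₁.continuous hsupp₁.1 3 _)
    (integrableOn_norm_sq_mul_pow_of_hasCompactSupport hZ₂.continuous hsupp₂.1 3 _) hdet
end

section
/- Let m ≥ 1 be an integer. There exists a constant C = C(m) such that for every continuously differentiable ε : (0,∞) → ℂ with ‖ε‖_{L²} < ∞ and ‖ε‖_{Ḣ¹_m} < ∞, one has the Hardy-type estimate ( 2π·∫₀^∞ (2·A_θ[Q,ε](r)/r)²·|ε(r)|²·r dr )^{1/2} ≤ C·‖ε‖_{Ḣ¹_m}^{3/2}·‖ε‖_{L²}^{1/2}. -/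
open MeasureTheory Set Filter

/-!
Write `‖·‖` for the norm of `L²(2π r dr)`. Moving a factor `√r` from `ε` to `Q` does not change
`A_θ[Q,ε]`, so Cauchy–Schwarz bounds `2 A_θ[Q,ε]` uniformly by `‖√r Q‖ ‖ε/√r‖ / 2π`. Hence
`‖(2 A_θ[Q,ε]/r) ε‖ ≤ ‖√r Q‖ ‖ε/√r‖ ‖ε/r‖ / 2π`, and a second application of Cauchy–Schwarz
interpolates `‖ε/√r‖² ≤ ‖ε/r‖ ‖ε‖`. The vortex decays fast enough that `‖√r Q‖ < ∞`, and
`‖ε/r‖ ≤ ‖ε‖_{Ḣ¹_m}` because `m ≥ 1`.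
-/

/-- The measure `2π r dr` on `(0, ∞)`, that is, planar Lebesgue measure seen by radial functions;
`L2sq` is the squared norm of its `L²` space. -/
noncomputable def radialMeasure : Measure ℝ :=
  (volume.restrict (Ioi 0)).withDensity fun r => ENNReal.ofReal (2 * Real.pi * r)

theorem radialMeasure_absolutelyContinuous : radialMeasure ≪ volume.restrict (Ioi 0) :=
  withDensity_absolutelyContinuous _ _

theorem ae_radialMeasure_pos : ∀ᵐ r ∂radialMeasure, 0 < r :=
  radialMeasure_absolutelyContinuous.ae_le (ae_restrict_mem measurableSet_Ioi)

theorem setIntegral_radialMeasure {s : Set ℝ} (hs : MeasurableSet s) (hpos : s ⊆ Ioi 0)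
    (F : ℝ → ℝ) : ∫ r in s, F r ∂radialMeasure = 2 * Real.pi * ∫ r in s, F r * r := by
  rw [radialMeasure, restrict_withDensity hs, Measure.restrict_restrict hs,
    inter_eq_self_of_subset_left hpos,
    integral_withDensity_eq_integral_toReal_smul (by fun_prop) (by simp), ← integral_const_mul]
  refine setIntegral_congr_fun hs fun r hr => ?_
  have hr : 0 < r := hpos hr
  simp only [smul_eq_mul, ENNReal.toReal_ofReal (by positivity : 0 ≤ 2 * Real.pi * r)]
  ring

theorem integral_radialMeasure (F : ℝ → ℝ) :
    ∫ r, F r ∂radialMeasure = 2 * Real.pi * ∫ r in Ioi 0, F r * r := by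
  rw [← setIntegral_radialMeasure measurableSet_Ioi subset_rfl,
    setIntegral_eq_integral_of_ae_compl_eq_zero]
  filter_upwards [ae_radialMeasure_pos] with r hr hr' using absurd hr hr'

theorem integrable_radialMeasure_iff {F : ℝ → ℝ} :
    Integrable F radialMeasure ↔ IntegrableOn (fun r => F r * r) (Ioi 0) := by
  rw [radialMeasure, integrable_withDensity_iff_integrable_smul' (by fun_prop) (by simp),
    IntegrableOn, ← integrable_const_mul_iff (IsUnit.mk0 (2 * Real.pi) Real.two_pi_pos.ne')
      fun r => F r * r]
  refine integrable_congr ?_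
  filter_upwards [ae_restrict_mem measurableSet_Ioi] with r hr
  have hr : 0 < r := hr
  simp only [smul_eq_mul, ENNReal.toReal_ofReal (by positivity : 0 ≤ 2 * Real.pi * r)]
  ring

theorem memLp_two_radialMeasure_iff {u : ℝ → ℂ} (hu : AEStronglyMeasurable u radialMeasure) :
    MemLp u 2 radialMeasure ↔ IntegrableOn (fun r => ‖u r‖ ^ 2 * r) (Ioi 0) := by
  rw [memLp_two_iff_integrable_sq_norm hu, integrable_radialMeasure_iff]

theorem L2sq_eq_integral_radialMeasure (u : ℝ → ℂ) :
    L2sq u = ∫ r, ‖u r‖ ^ 2 ∂radialMeasure :=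
  (integral_radialMeasure _).symm

theorem integral_norm_mul_norm_le_sqrt_L2sq {f g : ℝ → ℂ} (hf : MemLp f 2 radialMeasure)
    (hg : MemLp g 2 radialMeasure) :
    ∫ r, ‖f r‖ * ‖g r‖ ∂radialMeasure ≤ √(L2sq f) * √(L2sq g) := by
  have h := integral_mul_norm_le_Lp_mul_Lq (p := 2) (q := 2) Real.HolderConjugate.two_two
    (by simpa using hf) (by simpa using hg)
  simpa [L2sq_eq_integral_radialMeasure, Real.sqrt_eq_rpow] using h

theorem sqrt_L2sq_smul_le {φ : ℝ → ℝ} {u : ℝ → ℂ} {M : ℝ} (hM : 0 ≤ M)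
    (hφ : ∀ r, 0 < r → |φ r| ≤ M) (hu : MemLp u 2 radialMeasure) :
    √(L2sq fun r => φ r • u r) ≤ M * √(L2sq u) := by
  rw [Real.sqrt_le_left (by positivity), mul_pow,
    Real.sq_sqrt (by rw [L2sq_eq_integral_radialMeasure]; positivity),
    L2sq_eq_integral_radialMeasure, L2sq_eq_integral_radialMeasure, ← integral_const_mul]
  refine integral_mono_of_nonneg (.of_forall fun r => by positivity)
    ((memLp_two_iff_integrable_sq_norm hu.1).1 hu |>.const_mul _) ?_
  filter_upwards [ae_radialMeasure_pos] with r hr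
  rw [norm_smul, mul_pow, Real.norm_eq_abs]
  gcongr
  exact hφ r hr

section Interpolation

variable {u : ℝ → ℂ}

theorem norm_inv_sqrt_smul_sq (u : ℝ → ℂ) {r : ℝ} (hr : 0 < r) :
    ‖(√r)⁻¹ • u r‖ ^ 2 = ‖r⁻¹ • u r‖ * ‖u r‖ := by
  rw [norm_smul, norm_smul, mul_pow, norm_inv, norm_inv, inv_pow, Real.norm_eq_abs, sq_abs,
    Real.sq_sqrt hr.le, Real.norm_of_nonneg hr.le]
  ring

theorem memLp_inv_sqrt_smul (hu : MemLp u 2 radialMeasure)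
    (hu' : MemLp (fun r => r⁻¹ • u r) 2 radialMeasure) :
    MemLp (fun r => (√r)⁻¹ • u r) 2 radialMeasure := by
  have hmeas : AEStronglyMeasurable (fun r => (√r)⁻¹ • u r) radialMeasure :=
    Real.continuous_sqrt.measurable.inv.aestronglyMeasurable.smul hu.1
  rw [memLp_two_iff_integrable_sq_norm hmeas]
  refine (hu'.norm.integrable_mul hu.norm).congr ?_
  filter_upwards [ae_radialMeasure_pos] with r hr using (norm_inv_sqrt_smul_sq u hr).symm

theorem L2sq_inv_sqrt_smul_le (hu : MemLp u 2 radialMeasure)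
    (hu' : MemLp (fun r => r⁻¹ • u r) 2 radialMeasure) :
    L2sq (fun r => (√r)⁻¹ • u r) ≤ √(L2sq fun r => r⁻¹ • u r) * √(L2sq u) := by
  refine le_of_eq_of_le ?_ (integral_norm_mul_norm_le_sqrt_L2sq hu' hu)
  rw [L2sq_eq_integral_radialMeasure]
  refine integral_congr_ae ?_
  filter_upwards [ae_radialMeasure_pos] with r hr using norm_inv_sqrt_smul_sq u hr

end Interpolation

section Potential

variable {f g : ℝ → ℂ} {r : ℝ}

theorem two_mul_Atheta2_eq (hr : 0 ≤ r) : 2 * Atheta2 f g r =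
    -((2 * Real.pi)⁻¹ * ∫ s in Ioc 0 r, ((starRingEnd ℂ) (f s) * g s).re ∂radialMeasure) := by
  rw [setIntegral_radialMeasure measurableSet_Ioc Ioc_subset_Ioi_self,
    inv_mul_cancel_left₀ Real.two_pi_pos.ne', Atheta2, intervalIntegral.integral_of_le hr]
  ring

theorem Atheta2_smul_inv_smul {w : ℝ → ℝ} (hw : ∀ s, 0 < s → w s ≠ 0) (hr : 0 ≤ r) :
    Atheta2 (fun s => w s • f s) (fun s => (w s)⁻¹ • g s) r = Atheta2 f g r := by
  simp only [Atheta2, intervalIntegral.integral_of_le hr]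
  congr 1
  refine setIntegral_congr_fun measurableSet_Ioc fun s hs => ?_
  have hws : (w s : ℂ) ≠ 0 := Complex.ofReal_ne_zero.2 (hw s hs.1)
  simp only [Complex.real_smul, map_mul, Complex.conj_ofReal, Complex.ofReal_inv]
  field_simp

theorem abs_two_mul_Atheta2_le (hf : MemLp f 2 radialMeasure) (hg : MemLp g 2 radialMeasure)
    (hr : 0 ≤ r) : |2 * Atheta2 f g r| ≤ (2 * Real.pi)⁻¹ * (√(L2sq f) * √(L2sq g)) := by
  have hfg : Integrable (fun s => ‖f s‖ * ‖g s‖) radialMeasure := hf.norm.integrable_mul hg.norm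
  rw [two_mul_Atheta2_eq hr, abs_neg, abs_mul, abs_of_pos (inv_pos.2 Real.two_pi_pos)]
  gcongr
  calc |∫ s in Ioc 0 r, ((starRingEnd ℂ) (f s) * g s).re ∂radialMeasure|
      ≤ ∫ s in Ioc 0 r, ‖f s‖ * ‖g s‖ ∂radialMeasure := by
        rw [← Real.norm_eq_abs]
        refine norm_integral_le_of_norm_le hfg.integrableOn (.of_forall fun s => ?_)
        exact (Complex.abs_re_le_norm _).trans_eq (by rw [norm_mul, RCLike.norm_conj])
    _ ≤ ∫ s, ‖f s‖ * ‖g s‖ ∂radialMeasure :=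
        setIntegral_le_integral hfg (.of_forall fun s => by positivity)
    _ ≤ √(L2sq f) * √(L2sq g) := integral_norm_mul_norm_le_sqrt_L2sq hf hg

theorem abs_two_mul_Atheta2_le_sqrt_weighted
    (hf : MemLp (fun s => √s • f s) 2 radialMeasure)
    (hg : MemLp (fun s => (√s)⁻¹ • g s) 2 radialMeasure) (hr : 0 ≤ r) :
    |2 * Atheta2 f g r| ≤
      (2 * Real.pi)⁻¹ * (√(L2sq fun s => √s • f s) * √(L2sq fun s => (√s)⁻¹ • g s)) := by
  rw [← Atheta2_smul_inv_smul (fun s hs => (Real.sqrt_pos.2 hs).ne') hr]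
  exact abs_two_mul_Atheta2_le hf hg hr

end Potential

theorem continuous_Q (m : ℕ) : Continuous (Q m) := by
  refine Continuous.div (by fun_prop) (by fun_prop) fun r => ?_
  have : 0 ≤ r ^ (2 * m + 2) := Even.pow_nonneg ⟨m + 1, by ring⟩ r
  positivity

theorem one_add_sq_le_two_mul_one_add_pow (m : ℕ) {r : ℝ} (hr : 0 ≤ r) :
    1 + r ^ 2 ≤ 2 * (1 + r ^ (2 * m + 2)) := by
  have hpow : 0 ≤ r ^ (2 * m + 2) := by positivity
  rcases le_total r 1 with hr1 | hr1
  · nlinarith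
  · have : r ^ 2 ≤ r ^ (2 * m + 2) := pow_le_pow_right₀ hr1 (by lia)
    linarith

theorem Q_mul_radius_sq (m : ℕ) (r : ℝ) : (Q m r * r) ^ 2 =
    8 * ((m : ℝ) + 1) ^ 2 * (r ^ (2 * m + 2) / (1 + r ^ (2 * m + 2)) ^ 2) := by
  have h8 : √8 ^ 2 = 8 := Real.sq_sqrt (by norm_num)
  rw [Q, div_mul_eq_mul_div, div_pow, mul_pow, mul_pow, mul_pow, h8]
  ring

theorem Q_mul_radius_sq_le (m : ℕ) {r : ℝ} (hr : 0 ≤ r) :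
    (Q m r * r) ^ 2 ≤ 16 * ((m : ℝ) + 1) ^ 2 * (1 + r ^ 2)⁻¹ := by
  have hpow : 0 ≤ r ^ (2 * m + 2) := by positivity
  have hratio : r ^ (2 * m + 2) / (1 + r ^ (2 * m + 2)) ^ 2 ≤ 2 * (1 + r ^ 2)⁻¹ := by
    rw [← div_eq_mul_inv, div_le_div_iff₀ (by positivity) (by positivity)]
    nlinarith [one_add_sq_le_two_mul_one_add_pow m hr]
  calc (Q m r * r) ^ 2
      = 8 * ((m : ℝ) + 1) ^ 2 * (r ^ (2 * m + 2) / (1 + r ^ (2 * m + 2)) ^ 2) := Q_mul_radius_sq m r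
    _ ≤ 8 * ((m : ℝ) + 1) ^ 2 * (2 * (1 + r ^ 2)⁻¹) := by gcongr
    _ = 16 * ((m : ℝ) + 1) ^ 2 * (1 + r ^ 2)⁻¹ := by ring

theorem memLp_sqrt_smul_Q (m : ℕ) :
    MemLp (fun r => √r • (Q m r : ℂ)) 2 radialMeasure := by
  have hcont : Continuous fun r => √r • (Q m r : ℂ) :=
    Real.continuous_sqrt.smul (Complex.continuous_ofReal.comp (continuous_Q m))
  rw [memLp_two_radialMeasure_iff hcont.aestronglyMeasurable]
  refine (integrable_inv_one_add_sq.const_mul (16 * ((m : ℝ) + 1) ^ 2)).integrableOn.mono'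
    (by fun_prop) ?_
  filter_upwards [ae_restrict_mem measurableSet_Ioi] with r hr
  have hr : 0 < r := hr
  rw [Real.norm_of_nonneg (by positivity)]
  calc ‖√r • (Q m r : ℂ)‖ ^ 2 * r = (Q m r * r) ^ 2 := by
        rw [norm_smul, mul_pow, Real.norm_eq_abs, sq_abs, Real.sq_sqrt hr.le, Complex.norm_real,
          Real.norm_eq_abs, sq_abs]
        ring
    _ ≤ 16 * ((m : ℝ) + 1) ^ 2 * (1 + r ^ 2)⁻¹ := Q_mul_radius_sq_le m hr.le

section H1m

variable {m : ℕ} {u : ℝ → ℂ}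

theorem norm_inv_smul_sq_le (hm : 1 ≤ m) (u : ℝ → ℂ) (r : ℝ) :
    ‖r⁻¹ • u r‖ ^ 2 ≤ ‖deriv u r‖ ^ 2 + (m : ℝ) ^ 2 * ‖u r‖ ^ 2 / r ^ 2 := by
  have hm2 : (1 : ℝ) ≤ (m : ℝ) ^ 2 := one_le_pow₀ (by exact_mod_cast hm)
  calc ‖r⁻¹ • u r‖ ^ 2 = 1 * (‖u r‖ ^ 2 / r ^ 2) := by
        rw [norm_smul, mul_pow, norm_inv, inv_pow, Real.norm_eq_abs, sq_abs]
        ring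
    _ ≤ (m : ℝ) ^ 2 * (‖u r‖ ^ 2 / r ^ 2) := by gcongr
    _ ≤ ‖deriv u r‖ ^ 2 + (m : ℝ) ^ 2 * ‖u r‖ ^ 2 / r ^ 2 := by
        rw [mul_div_assoc]
        exact le_add_of_nonneg_left (by positivity)

theorem memLp_inv_smul (hm : 1 ≤ m) (hu : AEStronglyMeasurable u radialMeasure)
    (hH : IntegrableOn (fun r => (‖deriv u r‖ ^ 2 + (m : ℝ) ^ 2 * ‖u r‖ ^ 2 / r ^ 2) * r)
      (Ioi 0)) : MemLp (fun r => r⁻¹ • u r) 2 radialMeasure := by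
  have hmeas : AEStronglyMeasurable (fun r => r⁻¹ • u r) radialMeasure :=
    measurable_inv.aestronglyMeasurable.smul hu
  rw [memLp_two_iff_integrable_sq_norm hmeas]
  refine (integrable_radialMeasure_iff.2 hH).mono' (hmeas.norm.pow 2) (.of_forall fun r => ?_)
  rw [Real.norm_of_nonneg (by positivity)]
  exact norm_inv_smul_sq_le hm u r

theorem L2sq_inv_smul_le_H1msq (hm : 1 ≤ m)
    (hH : IntegrableOn (fun r => (‖deriv u r‖ ^ 2 + (m : ℝ) ^ 2 * ‖u r‖ ^ 2 / r ^ 2) * r)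
      (Ioi 0)) : L2sq (fun r => r⁻¹ • u r) ≤ H1msq m u := by
  rw [L2sq_eq_integral_radialMeasure, H1msq, ← integral_radialMeasure]
  exact integral_mono_of_nonneg (.of_forall fun r => by positivity)
    (integrable_radialMeasure_iff.2 hH) (.of_forall (norm_inv_smul_sq_le hm u))

end H1m

theorem sqrt_mul_mul_eq_rpow {a b : ℝ} (ha : 0 ≤ a) :
    √(a * b) * a = a ^ ((3 : ℝ) / 2) * b ^ ((1 : ℝ) / 2) := by
  rw [Real.sqrt_mul ha, Real.sqrt_eq_rpow, Real.sqrt_eq_rpow,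
    show (3 : ℝ) / 2 = 1 / 2 + 1 by norm_num, Real.rpow_add_of_nonneg ha (by norm_num) zero_le_one,
    Real.rpow_one]
  ring

theorem stmt16_general {f ε : ℝ → ℂ} (hf : MemLp (fun r => √r • f r) 2 radialMeasure)
    (hε : MemLp ε 2 radialMeasure) (hε' : MemLp (fun r => r⁻¹ • ε r) 2 radialMeasure) :
    √(2 * Real.pi * ∫ r in Ioi 0, (2 * Atheta2 f ε r / r) ^ 2 * ‖ε r‖ ^ 2 * r) ≤
      (2 * Real.pi)⁻¹ * √(L2sq fun r => √r • f r) *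
        √(L2sq fun r => r⁻¹ • ε r) ^ ((3 : ℝ) / 2) * √(L2sq ε) ^ ((1 : ℝ) / 2) := by
  set k := √(L2sq fun r => √r • f r)
  set a := √(L2sq fun r => r⁻¹ • ε r)
  set b := √(L2sq ε)
  have hpotential (r : ℝ) (hr : 0 < r) :
      |2 * Atheta2 f ε r| ≤ (2 * Real.pi)⁻¹ * (k * √(a * b)) := by
    refine (abs_two_mul_Atheta2_le_sqrt_weighted hf (memLp_inv_sqrt_smul hε hε') hr.le).trans ?_
    gcongr
    exact L2sq_inv_sqrt_smul_le hε hε'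
  calc √(2 * Real.pi * ∫ r in Ioi 0, (2 * Atheta2 f ε r / r) ^ 2 * ‖ε r‖ ^ 2 * r)
      = √(L2sq fun r => (2 * Atheta2 f ε r) • r⁻¹ • ε r) := by
        simp only [L2sq, smul_smul, norm_smul, mul_pow, Real.norm_eq_abs, sq_abs, div_eq_mul_inv]
    _ ≤ (2 * Real.pi)⁻¹ * (k * √(a * b)) * a := sqrt_L2sq_smul_le (by positivity) hpotential hε'
    _ = (2 * Real.pi)⁻¹ * k * (√(a * b) * a) := by ring
    _ = (2 * Real.pi)⁻¹ * k * a ^ ((3 : ℝ) / 2) * b ^ ((1 : ℝ) / 2) := by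
        rw [sqrt_mul_mul_eq_rpow (Real.sqrt_nonneg _), ← mul_assoc]

/-- Hardy-type estimate
`‖(2 A_θ[Q,ε]/r) ε‖_{L²} ≤ C ‖ε‖_{Ḣ¹_m}^{3/2} ‖ε‖_{L²}^{1/2}`. -/
theorem stmt16 (m : ℕ) (hm : 1 ≤ m) :
    ∃ C : ℝ,
    ∀ ε : ℝ → ℂ, ContDiffOn ℝ 1 ε (Set.Ioi 0) →
      IntegrableOn (fun r => ‖ε r‖ ^ 2 * r) (Set.Ioi (0:ℝ)) →
      IntegrableOn (fun r => (‖deriv ε r‖ ^ 2 + (m : ℝ) ^ 2 * ‖ε r‖ ^ 2 / r ^ 2) * r)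
        (Set.Ioi (0:ℝ)) →
      Real.sqrt (2 * Real.pi * ∫ r in Set.Ioi (0:ℝ),
          (2 * Atheta2 (fun s => (Q m s : ℂ)) ε r / r) ^ 2 * ‖ε r‖ ^ 2 * r)
        ≤ C * Real.sqrt (H1msq m ε) ^ ((3 : ℝ) / 2) * Real.sqrt (L2sq ε) ^ ((1 : ℝ) / 2) := by
  refine ⟨(2 * Real.pi)⁻¹ * √(L2sq fun r => √r • (Q m r : ℂ)), fun ε hε hL hH => ?_⟩
  have hmeas : AEStronglyMeasurable ε radialMeasure :=
    (hε.continuousOn.aestronglyMeasurable measurableSet_Ioi).mono_ac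
      radialMeasure_absolutelyContinuous
  refine (stmt16_general (memLp_sqrt_smul_Q m) ((memLp_two_radialMeasure_iff hmeas).2 hL)
    (memLp_inv_smul hm hmeas hH)).trans ?_
  gcongr
  exact L2sq_inv_smul_le_H1msq hm hH
end
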